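/- arXiv:2304.03710 — 2 statements merged into one kernel-verified Lean document; each statement's English description precedes it below -/
import Mathlib

section
/- Let {G_t}_{t=0}^{C(n,2)} be a random graph process on {1,…,n}. For every fixed i ∈ ℕ⁺ and every function g : ℕ → ℝ with g(n) → ∞, with high probability |t_i − n·((1/6)·log n + log log n)| ≤ g(n)·n. -/
/-!
Write `L = (log n) / 6 + log log n` and let `h → ∞` slowly (at most `log log n`, and at most `g`). A
fixed spider (centre `w`, legs `a 0, a 1, a 2`, outer vertices `b 0, b 1, b 2`) is a 3-spider of
`G_t` exactly when its six edges are among the first `t` edges and no other edge at a leg is. For an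
ordering of `N` elements, the probability that `a` given elements come before time `s` and `b` other
ones not before time `t` is `s^{(a)} (N-t)^{(b)} / N^{(a+b)}` (falling factorials, `card_orderings`),
which here is asymptotically `(2s/n²)^a exp(-2t/n)^k` for `b = k n + O(1)`
(`tendsto_earlyLate_div_scale`). The expected number of spiders at time `t` is thus of order
`n (t/n)^6 exp(-6t/n)`, which passes through a constant at `t = n (L + O(1))`.

* At time `tUp ≈ n (L + h)` the first moment shows that there are no spiders
  (`tendsto_no_spider`), hence `t_i ≤ tUp`.
* For the lower bound, at least `i` spiders are needed at *every* time from `10n` to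
  `tLow ≈ n (L - h)`, for which a union bound over the times would be wasteful. Instead, only
  spiders that persist throughout a window `[s, t]` are counted: all six edges are present at time
  `s`, and no further edge at the legs is present at time `t`. Their expected number is of order
  `n (s/n)^6 exp(-6t/n)`, and it is unbounded for both windows `[10n, tMid]` and `[tMid, tLow]`, where
  `tMid ≈ tLow / 2`. Chebyshev's inequality (`tendsto_window`) then gives at least `i` persistent
  spiders in each window.

In the second moment computation, the vertex set is split into seven parts, and only spiders with
exactly one vertex in each part, in the prescribed role, are considered. Two such spiders that share
a leg can only coexist if they have the same centre and the same outer vertex next to that leg, so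
two compatible spiders are described by the set `J` of common legs, and are determined by
`13 - 2 |J|` vertices if `J ≠ ∅` (`Parts.sum_pr_Sp_and_le`).  The pairs with `J = ∅` contribute the
square of the first moment, and the others are negligible (`tendsto_pair_ratio`).
-/

open Filter
open scoped Classical

namespace PaperMu

/-- The probability that the binomial random graph `G(n,p)` satisfies the property `P`. -/
noncomputable def gnpProb (n : ℕ) (p : ℝ) (P : SimpleGraph (Fin n) → Prop) : ℝ :=
  ∑ G : SimpleGraph (Fin n),
    (if P G then p ^ G.edgeFinset.card * (1 - p) ^ (n.choose 2 - G.edgeFinset.card) else 0)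

/-- The graph `G_t` of the random graph process determined by an ordering `σ` of the
potential edges: `G_t` has as edges the first `t` edges according to `σ`. -/
noncomputable def processGraph (n : ℕ)
    (σ : Fin (n.choose 2) ≃ {e : Sym2 (Fin n) // ¬ e.IsDiag}) (t : ℕ) :
    SimpleGraph (Fin n) :=
  SimpleGraph.fromEdgeSet {e | ∃ k : Fin (n.choose 2), (k : ℕ) < t ∧ (σ k : Sym2 (Fin n)) = e}

/-- The probability that the random graph process `{G_t}` on `{1,…,n}` (viewed as the
trajectory `t ↦ G_t`, chosen uniformly over all orderings of the potential edges)
satisfies the property `P`. -/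
noncomputable def processProb (n : ℕ) (P : (ℕ → SimpleGraph (Fin n)) → Prop) : ℝ :=
  (∑ σ : Fin (n.choose 2) ≃ {e : Sym2 (Fin n) // ¬ e.IsDiag},
      (if P (processGraph n σ) then (1 : ℝ) else 0)) /
    (Fintype.card (Fin (n.choose 2) ≃ {e : Sym2 (Fin n) // ¬ e.IsDiag}) : ℝ)

/-- `μ(G)`: the minimum number of non-edges of `G` whose addition to `G` yields a
Hamiltonian graph. -/
noncomputable def mu {n : ℕ} (G : SimpleGraph (Fin n)) : ℕ :=
  sInf { m | ∃ F : Finset (Sym2 (Fin n)),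
    F.card = m ∧ (∀ e ∈ F, ¬ e.IsDiag ∧ e ∉ G.edgeSet) ∧
    (G ⊔ SimpleGraph.fromEdgeSet (F : Set (Sym2 (Fin n)))).IsHamiltonian }

/-- A graph (on `n` vertices) contains a cycle of length `ℓ`. -/
def HasCycleLength {n : ℕ} (G : SimpleGraph (Fin n)) (ℓ : ℕ) : Prop :=
  ∃ (v : Fin n) (w : G.Walk v v), w.IsCycle ∧ w.length = ℓ

/-- A graph on `n` vertices is pancyclic if it has cycles of all lengths `3 ≤ ℓ ≤ n`. -/
def IsPancyclic {n : ℕ} (G : SimpleGraph (Fin n)) : Prop :=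
  ∀ ℓ : ℕ, 3 ≤ ℓ → ℓ ≤ n → HasCycleLength G ℓ

/-- `μ̂(G)`: the minimum number of non-edges of `G` whose addition to `G` yields a
pancyclic graph. -/
noncomputable def muHat {n : ℕ} (G : SimpleGraph (Fin n)) : ℕ :=
  sInf { m | ∃ F : Finset (Sym2 (Fin n)),
    F.card = m ∧ (∀ e ∈ F, ¬ e.IsDiag ∧ e ∉ G.edgeSet) ∧
    IsPancyclic (G ⊔ SimpleGraph.fromEdgeSet (F : Set (Sym2 (Fin n)))) }

/-- `n_i(G)`: the number of vertices of degree `i` in `G`. -/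
noncomputable def degCount {n : ℕ} (G : SimpleGraph (Fin n)) (i : ℕ) : ℕ :=
  (Finset.univ.filter fun v => G.degree v = i).card

/-- The number of copies of the 3-star `K_{1,3}` in `G`: a copy is a vertex together
with a choice of three of its neighbours. -/
noncomputable def threeStarCount {n : ℕ} (G : SimpleGraph (Fin n)) : ℕ :=
  ∑ v : Fin n, Nat.choose (G.degree v) 3

/-- `t_i^*`: the minimum `t` such that `G_t` spans at least `i` copies of `K_{1,3}`. -/
noncomputable def tStar (n : ℕ) (i : ℕ) (Gs : ℕ → SimpleGraph (Fin n)) : ℕ :=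
  sInf { t | i ≤ threeStarCount (Gs t) }

/-- The number of 3-spiders of `G`: a 3-spider is determined by a centre `w` together with
three degree-2 vertices adjacent to `w` whose incident edges span a tree on 7 vertices. -/
noncomputable def spiderCount {n : ℕ} (G : SimpleGraph (Fin n)) : ℕ :=
  (Finset.univ.filter fun p : Fin n × Finset (Fin n) =>
    p.2.card = 3 ∧ (∀ a ∈ p.2, G.degree a = 2 ∧ G.Adj p.1 a) ∧
    (insert p.1 p.2 ∪ p.2.biUnion fun a => G.neighborFinset a).card = 7).card

/-- `t_i`: the minimum `t` greater than `10n` such that `G_t` spans fewer than `i`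
distinct 3-spiders. -/
noncomputable def tSpider (n : ℕ) (i : ℕ) (Gs : ℕ → SimpleGraph (Fin n)) : ℕ :=
  sInf { t | 10 * n < t ∧ spiderCount (Gs t) < i }

/-- The defining property of the strong 4-core: every vertex of `S ∪ N(S)` has at least
4 neighbours in `S`. -/
def CorePred {n : ℕ} (G : SimpleGraph (Fin n)) (S : Set (Fin n)) : Prop :=
  ∀ v : Fin n, (v ∈ S ∨ ∃ s ∈ S, G.Adj v s) → 4 ≤ (S ∩ {u | G.Adj v u}).ncard

/-- `C(G)`: the vertex set of the strong 4-core of `G`, i.e. the maximal set satisfying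
`CorePred` (the union of all such sets). -/
def coreSet {n : ℕ} (G : SimpleGraph (Fin n)) : Set (Fin n) :=
  ⋃₀ { S | CorePred G S }

/-- `B(G) = N(C(G))`, the external neighbourhood of the strong 4-core. -/
def bSet {n : ℕ} (G : SimpleGraph (Fin n)) : Set (Fin n) :=
  { v | v ∉ coreSet G ∧ ∃ u ∈ coreSet G, G.Adj v u }

/-- `A(G) = V(G) \ (B(G) ∪ C(G))`. -/
def aSet {n : ℕ} (G : SimpleGraph (Fin n)) : Set (Fin n) :=
  { v | v ∉ coreSet G ∧ v ∉ bSet G }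

/-- `G^{AB}`: the subgraph of `G` induced on `A(G) ∪ B(G)`, viewed as a graph on the
full vertex set (all vertices of `C(G)` are isolated in it). -/
def GAB {n : ℕ} (G : SimpleGraph (Fin n)) : SimpleGraph (Fin n) :=
  SimpleGraph.fromEdgeSet { e | e ∈ G.edgeSet ∧ ∀ v ∈ e, v ∉ coreSet G }

/-- The connected components of `G^{AB}` (those components of the ambient graph `GAB G`
all of whose vertices lie in `A(G) ∪ B(G)`). -/
def abComponents {n : ℕ} (G : SimpleGraph (Fin n)) : Set ((GAB G).ConnectedComponent) :=
  { c | ∀ v ∈ c.supp, v ∉ coreSet G }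

/-- `S(G)`: the set of connected components of `G^{AB}` with exactly one vertex in `A(G)`
and exactly three vertices in `B(G)`. -/
def sComponents {n : ℕ} (G : SimpleGraph (Fin n)) : Set ((GAB G).ConnectedComponent) :=
  { c | (c.supp ∩ aSet G).ncard = 1 ∧ (c.supp ∩ bSet G).ncard = 3 }

/-- A linear forest: a graph all of whose components are paths. Its components give a
disjoint path cover of any graph containing it. -/
noncomputable def IsLinearForest {n : ℕ} (P : SimpleGraph (Fin n)) : Prop :=
  P.IsAcyclic ∧ ∀ v : Fin n, P.degree v ≤ 2

/-- `a(G)`: the minimum over disjoint path covers `Q` of `G^{AB}` of the number of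
endpoints of paths of `Q` lying in `A(G)` (a vertex forming a path of length 0 counts
twice).  A disjoint path cover is encoded as a linear forest `P ≤ G^{AB}`; a vertex
`v ∈ A(G)` then contributes `2 - deg_P(v)` endpoints. -/
noncomputable def aVal {n : ℕ} (G : SimpleGraph (Fin n)) : ℕ :=
  sInf { m | ∃ P : SimpleGraph (Fin n), P ≤ GAB G ∧ IsLinearForest P ∧
    m = ∑ v : Fin n, (if v ∈ aSet G then 2 - P.degree v else 0) }

/-- `μ'(G) = ⌈a(G)/2⌉`. -/
noncomputable def muPrime {n : ℕ} (G : SimpleGraph (Fin n)) : ℕ :=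
  (aVal G + 1) / 2

/-! ### Counting orderings with prescribed early and late elements -/

lemma exists_perm_extending {E I : Type*} [Finite E] (φ ψ : I ↪ E) :
    ∃ τ : Equiv.Perm E, ∀ i, τ (φ i) = ψ i := by
  classical
  have := Fintype.ofFinite E
  let e : {x // x ∈ Set.range φ} ≃ {x // x ∈ Set.range ψ} :=
    (Equiv.ofInjective φ φ.injective).symm.trans (Equiv.ofInjective ψ ψ.injective)
  refine ⟨e.extendSubtype, fun i => ?_⟩
  rw [Equiv.extendSubtype_apply_of_mem e (φ i) ⟨i, rfl⟩]
  simp only [e, Equiv.trans_apply]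
  have : (Equiv.ofInjective φ φ.injective).symm ⟨φ i, ⟨i, rfl⟩⟩ = i := by
    rw [Equiv.symm_apply_eq]; rfl
  rw [this]; rfl

/-- The number of ways to place the elements of `I` at distinct positions before `s` and those
of `K` at distinct positions from `t` on. -/
lemma card_split_embeddings {I K : Type*} [Fintype I] [Fintype K] {N s t : ℕ} (hst : s ≤ t)
    (htN : t ≤ N) :
    (Finset.univ.filter fun ψ : (I ⊕ K) ↪ Fin N =>
      (∀ i, (ψ (Sum.inl i) : ℕ) < s) ∧ ∀ k, t ≤ (ψ (Sum.inr k) : ℕ)).card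
      = s.descFactorial (Fintype.card I) * (N - t).descFactorial (Fintype.card K) := by
  have h1 : Fintype.card ((I ↪ Fin s) × (K ↪ Fin (N - t)))
      = s.descFactorial (Fintype.card I) * (N - t).descFactorial (Fintype.card K) := by
    rw [Fintype.card_prod, Fintype.card_embedding_eq, Fintype.card_embedding_eq]
    simp
  rw [← h1, ← Finset.card_univ]
  symm
  let F : ((I ↪ Fin s) × (K ↪ Fin (N - t))) → (I ⊕ K) → Fin N := fun p =>
    Sum.elim (fun i => ⟨(p.1 i : ℕ), by omega⟩) (fun k => ⟨t + (p.2 k : ℕ), by omega⟩)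
  have hF : ∀ p, Function.Injective (F p) := by
    rintro p (i | i) (j | j) h
    · simpa [F, Fin.ext_iff, ← Fin.ext_iff] using h
    · simp only [F, Sum.elim_inl, Sum.elim_inr, Fin.ext_iff] at h
      have := (p.1 i).2
      omega
    · simp only [F, Sum.elim_inl, Sum.elim_inr, Fin.ext_iff] at h
      have := (p.1 j).2
      omega
    · simpa [F, Fin.ext_iff, ← Fin.ext_iff] using h
  refine Finset.card_bij (fun p _ => ⟨F p, hF p⟩) ?_ ?_ ?_
  · intro p _
    refine Finset.mem_filter.2 ⟨Finset.mem_univ _, fun i => (p.1 i).2, fun k => ?_⟩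
    exact Nat.le_add_right _ _
  · intro p _ q _ h
    have h' : ∀ x, F p x = F q x := fun x => DFunLike.congr_fun h x
    refine Prod.ext ?_ ?_
    · ext i
      simpa [F, Fin.ext_iff] using h' (Sum.inl i)
    · ext i
      simpa [F, Fin.ext_iff] using h' (Sum.inr i)
  · intro ψ hψ
    simp only [Finset.mem_filter, Finset.mem_univ, true_and] at hψ
    have hk : ∀ k, (ψ (Sum.inr k) : ℕ) - t < N - t := fun k => by
      have := hψ.2 k
      omega
    have hinl : Function.Injective fun i => (⟨ψ (Sum.inl i), hψ.1 i⟩ : Fin s) := by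
      intro i j h
      simpa [Fin.ext_iff, ← Fin.ext_iff] using h
    have hinr : Function.Injective fun k => (⟨(ψ (Sum.inr k) : ℕ) - t, hk k⟩ : Fin (N - t)) := by
      intro i j h
      have hi := hψ.2 i
      have hj := hψ.2 j
      simp only [Fin.mk.injEq] at h
      have : ψ (Sum.inr i) = ψ (Sum.inr j) := Fin.ext (by omega)
      simpa using this
    refine ⟨⟨⟨_, hinl⟩, ⟨_, hinr⟩⟩, Finset.mem_univ _, ?_⟩
    refine DFunLike.ext _ _ fun x => Fin.ext ?_
    rcases x with x | x
    · rfl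
    · exact Nat.add_sub_cancel' (hψ.2 x)

/-- Among all `N!` orderings of an `N`-element set, the proportion of those placing the `a`
elements of `A` among the first `s` and none of the `b` elements of `B` among the first `t` is
`s^{(a)} (N-t)^{(b)} / N^{(a+b)}` (falling factorials).  Both sides count the pairs consisting of
an ordering and an injection `A ⊕ B → E` into suitable positions: every injection has the same
number of suitable orderings. -/
lemma card_orderings {E : Type*} [Fintype E] {N : ℕ} (hN : Fintype.card E = N) (A B : Finset E)
    (hAB : Disjoint A B) {s t : ℕ} (hst : s ≤ t) (htN : t ≤ N) :
    (Finset.univ.filter fun σ : Fin N ≃ E =>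
      (∀ e ∈ A, (σ.symm e : ℕ) < s) ∧ ∀ e ∈ B, t ≤ (σ.symm e : ℕ)).card
      * N.descFactorial (A.card + B.card)
      = Fintype.card (Fin N ≃ E) * (s.descFactorial A.card * (N - t).descFactorial B.card) := by
  let I := {x // x ∈ A} ⊕ {x // x ∈ B}
  let good : (I ↪ Fin N) → Prop := fun ψ =>
    (∀ i, (ψ (Sum.inl i) : ℕ) < s) ∧ ∀ k, t ≤ (ψ (Sum.inr k) : ℕ)
  let Q : (I ↪ E) → (Fin N ≃ E) → Prop := fun φ σ => good (φ.trans σ.symm.toEmbedding)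
  have hinj : Function.Injective (Sum.elim Subtype.val Subtype.val : I → E) := by
    rintro (x | x) (y | y) h
    · exact congrArg Sum.inl (Subtype.ext h)
    · have h' : (x : E) = y := h
      exact absurd (h' ▸ y.2) (Finset.disjoint_left.1 hAB x.2)
    · have h' : (x : E) = y := h
      exact absurd (h' ▸ x.2) (Finset.disjoint_left.1 hAB y.2)
    · exact congrArg Sum.inr (Subtype.ext h)
  let φ₀ : I ↪ E := ⟨_, hinj⟩
  have hQ0 : (Finset.univ.filter fun σ : Fin N ≃ E =>
      (∀ e ∈ A, (σ.symm e : ℕ) < s) ∧ ∀ e ∈ B, t ≤ (σ.symm e : ℕ))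
      = Finset.univ.filter fun σ => Q φ₀ σ := by
    ext σ
    simp only [Finset.mem_filter, Finset.mem_univ, true_and]
    exact ⟨fun h => ⟨fun i => h.1 i i.2, fun k => h.2 k k.2⟩,
      fun h => ⟨fun e he => h.1 ⟨e, he⟩, fun e he => h.2 ⟨e, he⟩⟩⟩
  have step1 : ∀ φ : I ↪ E, (Finset.univ.filter fun σ => Q φ σ).card
      = (Finset.univ.filter fun σ => Q φ₀ σ).card := by
    intro φ
    obtain ⟨τ, hτ⟩ := exists_perm_extending φ φ₀
    refine Finset.card_bij (fun σ _ => σ.trans τ) ?_ ?_ ?_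
    · intro σ hσ
      simp only [Finset.mem_filter, Finset.mem_univ, true_and, Q, good] at hσ ⊢
      simpa [← hτ] using hσ
    · intro σ _ σ' _ h
      ext x
      simpa using DFunLike.congr_fun h x
    · intro σ hσ
      refine ⟨σ.trans τ.symm, ?_, by ext x; simp⟩
      simp only [Finset.mem_filter, Finset.mem_univ, true_and, Q, good] at hσ ⊢
      simpa [← hτ] using hσ
  have step2 : ∀ σ : Fin N ≃ E, (Finset.univ.filter fun φ => Q φ σ).card
      = s.descFactorial A.card * (N - t).descFactorial B.card := by
    intro σ
    have := card_split_embeddings (I := {x // x ∈ A}) (K := {x // x ∈ B}) hst htN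
    simp only [Fintype.card_coe] at this
    rw [← this]
    refine Finset.card_bij (fun φ _ => φ.trans σ.symm.toEmbedding) ?_ ?_ ?_
    · intro φ hφ
      simpa [Q, good] using hφ
    · intro φ _ φ' _ h
      ext x
      simpa using DFunLike.congr_fun h x
    · intro ψ hψ
      refine ⟨ψ.trans σ.toEmbedding, ?_, by ext x; simp⟩
      simpa [Q, good] using hψ
  have key : ∑ φ : I ↪ E, (Finset.univ.filter fun σ => Q φ σ).card
      = ∑ σ : Fin N ≃ E, (Finset.univ.filter fun φ => Q φ σ).card :=
    Finset.sum_card_bipartiteAbove_eq_sum_card_bipartiteBelow Q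
  simp only [step1, step2, Finset.sum_const, Finset.card_univ, smul_eq_mul] at key
  have hI : Fintype.card (I ↪ E) = N.descFactorial (A.card + B.card) := by
    rw [Fintype.card_embedding_eq, hN]
    simp [I]
  rw [hQ0, mul_comm, ← hI, key]

/-! ### Probabilities of events prescribing early and late edges -/

/-- The potential edges of a graph on `n` vertices. -/
abbrev Edge (n : ℕ) := {e : Sym2 (Fin n) // ¬ e.IsDiag}

/-- The orderings of the potential edges, i.e. the sample space of the random graph process. -/
abbrev Ordering (n : ℕ) := Fin (n.choose 2) ≃ Edge n

lemma card_Edge (n : ℕ) : Fintype.card (Edge n) = n.choose 2 := by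
  have := Sym2.card_subtype_not_diag (α := Fin n)
  rw [Fintype.card_fin] at this
  rw [← this]

instance (n : ℕ) : Nonempty (Ordering n) :=
  ⟨(Fintype.equivFinOfCardEq (card_Edge n)).symm⟩

/-- The probability of an event for a uniformly random ordering of the potential edges. -/
noncomputable def pr (n : ℕ) (P : Ordering n → Prop) : ℝ :=
  ((Finset.univ.filter P).card : ℝ) / (Fintype.card (Ordering n) : ℝ)

lemma pr_eq {n : ℕ} (P : Ordering n → Prop) [DecidablePred P] :
    pr n P = ((Finset.univ.filter P).card : ℝ) / (Fintype.card (Ordering n) : ℝ) := by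
  unfold pr
  congr

lemma card_Ordering_pos (n : ℕ) : (0 : ℝ) < Fintype.card (Ordering n) := by
  exact_mod_cast Fintype.card_pos

lemma processProb_eq_pr (n : ℕ) (P : (ℕ → SimpleGraph (Fin n)) → Prop) :
    processProb n P = pr n fun σ => P (processGraph n σ) := by
  simp [processProb, pr]

lemma pr_nonneg {n : ℕ} (P : Ordering n → Prop) : 0 ≤ pr n P := by
  unfold pr; positivity

lemma pr_mono {n : ℕ} {P Q : Ordering n → Prop} (h : ∀ σ, P σ → Q σ) : pr n P ≤ pr n Q := by
  unfold pr
  gcongr with σ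
  exact h σ

lemma pr_le_one {n : ℕ} (P : Ordering n → Prop) : pr n P ≤ 1 := by
  unfold pr
  rw [div_le_one (card_Ordering_pos n)]
  exact_mod_cast Finset.card_le_univ _

lemma pr_not {n : ℕ} (P : Ordering n → Prop) : pr n (fun σ => ¬ P σ) = 1 - pr n P := by
  have h := Finset.card_filter_add_card_filter_not (s := (Finset.univ : Finset (Ordering n))) P
  have hp := card_Ordering_pos n
  rw [pr_eq, pr_eq P, eq_sub_iff_add_eq, ← add_div, div_eq_one_iff_eq hp.ne', add_comm,
    ← Finset.card_univ]
  exact_mod_cast h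

lemma pr_or_le {n : ℕ} (P Q : Ordering n → Prop) :
    pr n (fun σ => P σ ∨ Q σ) ≤ pr n P + pr n Q := by
  rw [pr_eq, pr_eq P, pr_eq Q, ← add_div]
  gcongr
  rw [Finset.filter_or]
  exact_mod_cast Finset.card_union_le _ _

lemma pr_exists_le {n : ℕ} {ι : Type*} [Fintype ι] (P : ι → Ordering n → Prop) :
    pr n (fun σ => ∃ i, P i σ) ≤ ∑ i, pr n (P i) := by
  rw [pr_eq]
  simp only [pr_eq, ← Finset.sum_div]
  gcongr
  have : (Finset.univ.filter fun σ : Ordering n => ∃ i, P i σ)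
      = Finset.univ.biUnion fun i => Finset.univ.filter (P i) := by
    ext σ; simp
  rw [this]
  exact_mod_cast Finset.card_biUnion_le

/-- The event that all edges of `A` are among the first `s` edges, and no edge of `B` is among the
first `t` edges. -/
def Ev {n : ℕ} (A B : Finset (Edge n)) (s t : ℕ) (σ : Ordering n) : Prop :=
  (∀ e ∈ A, (σ.symm e : ℕ) < s) ∧ ∀ e ∈ B, t ≤ (σ.symm e : ℕ)

/-- The probability that, in a uniformly random ordering of `N` elements, `a` given elements are
among the first `s` and `b` other given elements are not among the first `t`, where `s ≤ t`. -/
noncomputable def earlyLate (N s t a b : ℕ) : ℝ :=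
  (s.descFactorial a : ℝ) * ((N - t).descFactorial b : ℝ) / (N.descFactorial (a + b) : ℝ)

lemma pr_Ev {n : ℕ} {A B : Finset (Edge n)} (hAB : Disjoint A B) {s t : ℕ} (hst : s ≤ t)
    (ht : t ≤ n.choose 2) :
    pr n (Ev A B s t) = earlyLate (n.choose 2) s t A.card B.card := by
  have h := card_orderings (card_Edge n) A B hAB hst ht
  have hcard : A.card + B.card ≤ n.choose 2 := by
    rw [← Finset.card_union_of_disjoint hAB, ← card_Edge n]
    exact Finset.card_le_univ _
  have hpos : (0 : ℝ) < ((n.choose 2).descFactorial (A.card + B.card) : ℝ) := by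
    exact_mod_cast Nat.descFactorial_pos.2 hcard
  have h' : (Finset.univ.filter (Ev A B s t)).card * (n.choose 2).descFactorial (A.card + B.card)
      = Fintype.card (Ordering n)
        * (s.descFactorial A.card * (n.choose 2 - t).descFactorial B.card) := by
    convert h
    exact Iff.rfl
  rw [earlyLate, pr, div_eq_div_iff (card_Ordering_pos n).ne' hpos.ne', mul_comm (_ * _ : ℝ)]
  exact_mod_cast h'

lemma pr_Ev_le {n : ℕ} {A B : Finset (Edge n)} (hAB : Disjoint A B) {s t a b : ℕ} (hst : s ≤ t)
    (ht : t ≤ n.choose 2) (ha : a ≤ A.card) (hb : b ≤ B.card) :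
    pr n (Ev A B s t) ≤ earlyLate (n.choose 2) s t a b := by
  obtain ⟨A', hA', rfl⟩ := Finset.exists_subset_card_eq ha
  obtain ⟨B', hB', rfl⟩ := Finset.exists_subset_card_eq hb
  rw [← pr_Ev (Finset.disjoint_of_subset_left hA' (Finset.disjoint_of_subset_right hB' hAB)) hst ht]
  exact pr_mono fun σ h => ⟨fun e he => h.1 e (hA' he), fun e he => h.2 e (hB' he)⟩

/-! ### Spiders in terms of the ordering of the edges -/

/-- The edges meeting the vertex set `S`. -/
noncomputable def inc {n : ℕ} (S : Finset (Fin n)) : Finset (Edge n) :=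
  Finset.univ.filter fun e => ∃ v ∈ S, v ∈ e.1

/-- The number of potential edges meeting a given set of `k` vertices out of `n`. -/
def incCard (n k : ℕ) : ℕ := n.choose 2 - (n - k).choose 2

lemma card_inc {n : ℕ} (S : Finset (Fin n)) : (inc S).card = incCard n S.card := by
  have h1 : ((inc S)ᶜ.map (Function.Embedding.subtype _)) = Sᶜ.offDiag.image Sym2.mk.uncurry := by
    ext e
    induction e with
    | _ x y =>
      simp only [inc, Finset.mem_map, Finset.mem_compl, Finset.mem_filter, Finset.mem_univ,
        true_and, Function.Embedding.subtype_apply, Subtype.exists, exists_and_right,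
        exists_eq_right, Finset.mem_image, Finset.mem_offDiag, Prod.exists]
      constructor
      · rintro ⟨hd, h⟩
        refine ⟨x, y, ⟨fun hx => h ⟨x, hx, by simp⟩, fun hy => h ⟨y, hy, by simp⟩, ?_⟩, rfl⟩
        simpa using hd
      · rintro ⟨u, v, ⟨hu, hv, huv⟩, he⟩
        rw [← he]
        refine ⟨by simpa using huv, ?_⟩
        rintro ⟨z, hz, hz'⟩
        rcases Sym2.mem_iff.1 hz' with rfl | rfl
        · exact hu hz
        · exact hv hz
  have h2 := congrArg Finset.card h1
  rw [Finset.card_map, Sym2.card_image_offDiag, Finset.card_compl, Finset.card_compl,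
    Fintype.card_fin, card_Edge] at h2
  have h3 : (inc S).card ≤ n.choose 2 := by
    rw [← card_Edge n]; exact Finset.card_le_univ _
  unfold incCard
  omega

/-- The six edges, indexed by `Fin 3 × Bool`, of a spider with centre `w`, legs `a 0, a 1, a 2`
and respective outer vertices `b 0, b 1, b 2`. -/
def legEdge {n : ℕ} (w : Fin n) (a b : Fin 3 → Fin n) (p : Fin 3 × Bool) : Sym2 (Fin n) :=
  if p.2 then s(a p.1, b p.1) else s(a p.1, w)

/-- The set of the six edges of a spider. -/
noncomputable def legs {n : ℕ} (w : Fin n) (a b : Fin 3 → Fin n) : Finset (Edge n) :=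
  (Finset.univ.image (legEdge w a b)).subtype _

/-- The seven vertices `w, a 0, a 1, a 2, b 0, b 1, b 2` are distinct. -/
structure Distinct7 {n : ℕ} (w : Fin n) (a b : Fin 3 → Fin n) : Prop where
  inj_a : Function.Injective a
  inj_b : Function.Injective b
  aw : ∀ j, a j ≠ w
  bw : ∀ j, b j ≠ w
  ab : ∀ i j, a i ≠ b j

lemma mem_legs {n : ℕ} {w : Fin n} {a b : Fin 3 → Fin n} {e : Edge n} :
    e ∈ legs w a b ↔ ∃ j, e.1 = s(a j, w) ∨ e.1 = s(a j, b j) := by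
  simp only [legs, Finset.mem_subtype, Finset.mem_image, Finset.mem_univ, true_and, legEdge,
    Prod.exists, Bool.exists_bool]
  simp [eq_comm]

lemma legs_subset_inc {n : ℕ} (w : Fin n) (a b : Fin 3 → Fin n) :
    legs w a b ⊆ inc (Finset.univ.image a) := by
  intro e he
  obtain ⟨j, h | h⟩ := mem_legs.1 he <;>
  · refine Finset.mem_filter.2 ⟨Finset.mem_univ _, a j, by simp, ?_⟩
    rw [h]; simp

/-- Among the edges of the spider, those at `a j` are the ones to `w` and to `b j`. -/
lemma mem_legs_iff {n : ℕ} {w : Fin n} {a b : Fin 3 → Fin n} (h : Distinct7 w a b) (j : Fin 3)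
    (v : Fin n) (hv : ¬ (s(a j, v) : Sym2 (Fin n)).IsDiag) :
    (⟨s(a j, v), hv⟩ : Edge n) ∈ legs w a b ↔ v = w ∨ v = b j := by
  rw [mem_legs]
  constructor
  · rintro ⟨i, h' | h'⟩ <;> simp only [Sym2.eq_iff] at h'
    · rcases h' with ⟨_, h2⟩ | ⟨h1, _⟩
      · exact Or.inl h2
      · exact absurd h1 (h.aw j)
    · rcases h' with ⟨h1, h2⟩ | ⟨h1, _⟩
      · exact Or.inr (by rw [h2, h.inj_a h1])
      · exact absurd h1 (h.ab j i)
  · rintro (rfl | rfl)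
    · exact ⟨j, Or.inl rfl⟩
    · exact ⟨j, Or.inr rfl⟩

lemma legEdge_injective {n : ℕ} {w : Fin n} {a b : Fin 3 → Fin n} (h : Distinct7 w a b) :
    Function.Injective (legEdge w a b) := by
  rintro ⟨i, x⟩ ⟨j, y⟩ hij
  have h1 := h.aw
  have h2 := h.bw
  have h3 := h.ab
  have h4 : ∀ i j, a i = a j → i = j := fun i j => @h.inj_a i j
  cases x <;> cases y <;> simp [legEdge] at hij ⊢ <;> grind

lemma card_legs {n : ℕ} {w : Fin n} {a b : Fin 3 → Fin n} (h : Distinct7 w a b) :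
    (legs w a b).card = 6 := by
  rw [legs, Finset.card_subtype, Finset.filter_true_of_mem,
    Finset.card_image_of_injective _ (legEdge_injective h)]
  · simp
  · intro e he
    obtain ⟨⟨j, x⟩, _, rfl⟩ := Finset.mem_image.1 he
    cases x
    · simpa [legEdge] using h.aw j
    · simpa [legEdge] using h.ab j j

/-- The event that the six edges of the given spider are among the first `s` edges, while no
further edge at its legs is among the first `t` edges: the spider persists throughout
`G_s, …, G_t`. -/
def SpiderEv {n : ℕ} (w : Fin n) (a b : Fin 3 → Fin n) (s t : ℕ) : Ordering n → Prop :=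
  Ev (legs w a b) (inc (Finset.univ.image a) \ legs w a b) s t

lemma SpiderEv.mono {n : ℕ} {w : Fin n} {a b : Fin 3 → Fin n} {s t s' t' : ℕ} {σ : Ordering n}
    (h : SpiderEv w a b s t σ) (hs : s ≤ s') (ht : t' ≤ t) : SpiderEv w a b s' t' σ :=
  ⟨fun e he => (h.1 e he).trans_le hs, fun e he => ht.trans (h.2 e he)⟩

lemma pr_SpiderEv {n : ℕ} {w : Fin n} {a b : Fin 3 → Fin n} (h : Distinct7 w a b) {s t : ℕ}
    (hst : s ≤ t) (ht : t ≤ n.choose 2) :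
    pr n (SpiderEv w a b s t) = earlyLate (n.choose 2) s t 6 (incCard n 3 - 6) := by
  rw [SpiderEv, pr_Ev Finset.disjoint_sdiff hst ht,
    Finset.card_sdiff_of_subset (legs_subset_inc w a b), card_legs h, card_inc, Finset.card_image_of_injective _ h.inj_a]
  simp

lemma processGraph_adj {n : ℕ} (σ : Ordering n) (t : ℕ) (u v : Fin n) :
    (processGraph n σ t).Adj u v ↔
      ∃ h : ¬ (s(u, v) : Sym2 (Fin n)).IsDiag, (σ.symm ⟨s(u, v), h⟩ : ℕ) < t := by
  simp only [processGraph, SimpleGraph.fromEdgeSet_adj, Set.mem_ofPred_eq]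
  constructor
  · rintro ⟨⟨k, hk, hk'⟩, huv⟩
    refine ⟨by simpa using huv, ?_⟩
    have : σ.symm ⟨s(u, v), by simpa using huv⟩ = k := by
      rw [Equiv.symm_apply_eq]; exact Subtype.ext hk'.symm
    rwa [this]
  · rintro ⟨h, h'⟩
    exact ⟨⟨_, h', by simp⟩, by simpa using h⟩

/-- In terms of the graph `G_t`, the spider event says that the legs have degree two, with the
prescribed neighbourhoods. -/
lemma SpiderEv_iff {n : ℕ} {w : Fin n} {a b : Fin 3 → Fin n} (h : Distinct7 w a b) (t : ℕ)
    (σ : Ordering n) :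
    SpiderEv w a b t t σ ↔ ∀ j, (processGraph n σ t).neighborFinset (a j) = {w, b j} := by
  constructor
  · intro hS j
    ext v
    rw [SimpleGraph.mem_neighborFinset, processGraph_adj]
    simp only [Finset.mem_insert, Finset.mem_singleton]
    constructor
    · rintro ⟨hd, hlt⟩
      rw [← mem_legs_iff h j v hd]
      by_contra hcon
      refine absurd hlt (not_lt.2 (hS.2 _ (Finset.mem_sdiff.2 ⟨?_, hcon⟩)))
      exact Finset.mem_filter.2 ⟨Finset.mem_univ _, a j, by simp, by simp⟩
    · intro hv
      have hd : ¬ (s(a j, v) : Sym2 (Fin n)).IsDiag := by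
        rcases hv with rfl | rfl
        · simpa using h.aw j
        · simpa using h.ab j j
      exact ⟨hd, hS.1 _ ((mem_legs_iff h j v hd).2 hv)⟩
  · intro hN
    have key : ∀ j v (hd : ¬ (s(a j, v) : Sym2 (Fin n)).IsDiag),
        (σ.symm ⟨s(a j, v), hd⟩ : ℕ) < t ↔ (⟨s(a j, v), hd⟩ : Edge n) ∈ legs w a b := by
      intro j v hd
      have := Finset.ext_iff.1 (hN j) v
      rw [SimpleGraph.mem_neighborFinset, processGraph_adj] at this
      rw [mem_legs_iff h]
      simp only [Finset.mem_insert, Finset.mem_singleton] at this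
      rw [← this]
      exact ⟨fun h => ⟨hd, h⟩, fun ⟨_, h⟩ => h⟩
    have key' : ∀ e ∈ inc (Finset.univ.image a), (σ.symm e : ℕ) < t ↔ e ∈ legs w a b := by
      rintro ⟨e, hd⟩ he
      obtain ⟨v, hv, hve⟩ := (Finset.mem_filter.1 he).2
      obtain ⟨j, _, rfl⟩ := Finset.mem_image.1 hv
      obtain ⟨u, rfl⟩ := hve
      exact key j u hd
    refine ⟨fun e he => (key' e (legs_subset_inc w a b he)).2 he, fun e he => ?_⟩
    rw [Finset.mem_sdiff] at he
    exact not_lt.1 fun hlt => he.2 ((key' e he.1).1 hlt)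

lemma exists_of_spiderCount_pos {n t : ℕ} {σ : Ordering n}
    (h : 0 < spiderCount (processGraph n σ t)) :
    ∃ w a b, Distinct7 w a b ∧ SpiderEv w a b t t σ := by
  obtain ⟨⟨w, S⟩, hp⟩ := Finset.card_pos.1 h
  obtain ⟨hS3, hS, h7⟩ := (Finset.mem_filter.1 hp).2
  simp only at hS3 hS h7
  obtain ⟨x, y, z, hxy, hxz, hyz, hSe⟩ := Finset.card_eq_three.1 hS3
  let a : Fin 3 → Fin n := ![x, y, z]
  have hSa : S = Finset.univ.image a := by
    rw [hSe]; ext v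
    simp [a, Fin.exists_fin_succ, eq_comm]
  have hN : ∀ j, ∃ u, (processGraph n σ t).neighborFinset (a j) = {w, u} := by
    intro j
    obtain ⟨hd, hadj⟩ := hS (a j) (by rw [hSa]; simp)
    rw [← SimpleGraph.card_neighborFinset_eq_degree] at hd
    obtain ⟨u, v, _, huv⟩ := Finset.card_eq_two.1 hd
    have hw : w ∈ (processGraph n σ t).neighborFinset (a j) := by
      rw [SimpleGraph.mem_neighborFinset]; exact hadj.symm
    rw [huv] at hw ⊢
    rcases Finset.mem_insert.1 hw with rfl | hw
    · exact ⟨v, rfl⟩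
    · rw [Finset.mem_singleton.1 hw]
      exact ⟨u, Finset.pair_comm _ _⟩
  choose b hb using hN
  let F : Option (Fin 3 ⊕ Fin 3) → Fin n := fun o => o.elim w (Sum.elim a b)
  have hsub : (insert w S ∪ S.biUnion fun v => (processGraph n σ t).neighborFinset v)
      ⊆ Finset.univ.image F := by
    intro v hv
    have hw : w ∈ Finset.univ.image F := Finset.mem_image.2 ⟨none, Finset.mem_univ _, rfl⟩
    rcases Finset.mem_union.1 hv with hv | hv
    · rcases Finset.mem_insert.1 hv with rfl | hv
      · exact hw
      · rw [hSa] at hv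
        obtain ⟨j, _, rfl⟩ := Finset.mem_image.1 hv
        exact Finset.mem_image.2 ⟨some (Sum.inl j), Finset.mem_univ _, rfl⟩
    · obtain ⟨u, hu, hv⟩ := Finset.mem_biUnion.1 hv
      rw [hSa] at hu
      obtain ⟨j, _, rfl⟩ := Finset.mem_image.1 hu
      rw [hb] at hv
      rcases Finset.mem_insert.1 hv with rfl | hv
      · exact hw
      · rw [Finset.mem_singleton.1 hv]
        exact Finset.mem_image.2 ⟨some (Sum.inr j), Finset.mem_univ _, rfl⟩
  have hcard : (Finset.univ.image F).card = (Finset.univ : Finset (Option (Fin 3 ⊕ Fin 3))).card := by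
    apply le_antisymm Finset.card_image_le
    have := Finset.card_le_card hsub
    rw [h7] at this
    simpa using this
  have hF : Function.Injective F := fun u v huv =>
    Finset.card_image_iff.1 hcard (Finset.mem_coe.2 (Finset.mem_univ _))
      (Finset.mem_coe.2 (Finset.mem_univ _)) huv
  have hD : Distinct7 w a b := by
    refine ⟨fun i j h => ?_, fun i j h => ?_, fun j h => ?_, fun j h => ?_, fun i j h => ?_⟩
    · simpa using @hF (some (Sum.inl i)) (some (Sum.inl j)) h
    · simpa using @hF (some (Sum.inr i)) (some (Sum.inr j)) h
    · simpa using @hF (some (Sum.inl j)) none h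
    · simpa using @hF (some (Sum.inr j)) none h
    · simpa using @hF (some (Sum.inl i)) (some (Sum.inr j)) h
  exact ⟨w, a, b, hD, (SpiderEv_iff hD t σ).2 hb⟩

lemma earlyLate_nonneg (N s t a b : ℕ) : 0 ≤ earlyLate N s t a b := by
  unfold earlyLate; positivity

/-- First moment bound for the existence of a spider in `G_t`. -/
lemma pr_spiderCount_pos_le {n t : ℕ} (ht : t ≤ n.choose 2) :
    pr n (fun σ => 0 < spiderCount (processGraph n σ t))
      ≤ (n : ℝ) ^ 7 * earlyLate (n.choose 2) t t 6 (incCard n 3 - 6) := by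
  let P : (Fin n × (Fin 3 → Fin n) × (Fin 3 → Fin n)) → Ordering n → Prop := fun T σ =>
    Distinct7 T.1 T.2.1 T.2.2 ∧ SpiderEv T.1 T.2.1 T.2.2 t t σ
  have h1 : pr n (fun σ => 0 < spiderCount (processGraph n σ t)) ≤ ∑ T, pr n (P T) := by
    refine (pr_mono fun σ h => ?_).trans (pr_exists_le P)
    obtain ⟨w, a, b, h⟩ := exists_of_spiderCount_pos h
    exact ⟨(w, a, b), h⟩
  have h2 : ∀ T, pr n (P T) ≤ earlyLate (n.choose 2) t t 6 (incCard n 3 - 6) := by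
    intro T
    by_cases hT : Distinct7 T.1 T.2.1 T.2.2
    · rw [← pr_SpiderEv hT le_rfl ht]
      exact pr_mono fun σ h => h.2
    · refine le_trans (le_of_eq ?_) (earlyLate_nonneg _ _ _ _ _)
      simp [pr, P, hT]
  refine h1.trans ((Finset.sum_le_sum fun T _ => h2 T).trans (le_of_eq ?_))
  rw [Finset.sum_const, Finset.card_univ]
  simp only [Fintype.card_prod, Fintype.card_fun, Fintype.card_fin, nsmul_eq_mul]
  push_cast
  ring

/-! ### Spiders respecting a partition of the vertex set -/

/-- The choices of one element in each of seven sets of size `m`: the centre, the three legs and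
the three outer vertices of a spider. -/
abbrev Tup (m : ℕ) := Fin m × (Fin 3 → Fin m) × (Fin 3 → Fin m)

/-- Seven disjoint sets of `m` vertices, one for each vertex of a spider. -/
abbrev Parts (m n : ℕ) := (Fin m ⊕ (Fin 3 × Fin m) ⊕ (Fin 3 × Fin m)) ↪ Fin n

section Parts

variable {m n : ℕ} (e : Parts m n)

/-- The centre selected by `T`. -/
def Parts.w (T : Tup m) : Fin n := e (Sum.inl T.1)

/-- The legs selected by `T`. -/
def Parts.a (T : Tup m) (j : Fin 3) : Fin n := e (Sum.inr (Sum.inl (j, T.2.1 j)))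

/-- The outer vertices selected by `T`. -/
def Parts.b (T : Tup m) (j : Fin 3) : Fin n := e (Sum.inr (Sum.inr (j, T.2.2 j)))

lemma Parts.w_eq {T T' : Tup m} : e.w T = e.w T' ↔ T.1 = T'.1 := by simp [Parts.w]

lemma Parts.a_eq {T T' : Tup m} {i j : Fin 3} :
    e.a T i = e.a T' j ↔ i = j ∧ T.2.1 i = T'.2.1 j := by simp [Parts.a]

lemma Parts.b_eq {T T' : Tup m} {i j : Fin 3} :
    e.b T i = e.b T' j ↔ i = j ∧ T.2.2 i = T'.2.2 j := by simp [Parts.b]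

lemma Parts.a_ne_w (T T' : Tup m) (j : Fin 3) : e.a T j ≠ e.w T' := by simp [Parts.a, Parts.w]

lemma Parts.b_ne_w (T T' : Tup m) (j : Fin 3) : e.b T j ≠ e.w T' := by simp [Parts.b, Parts.w]

lemma Parts.a_ne_b (T T' : Tup m) (i j : Fin 3) : e.a T i ≠ e.b T' j := by
  simp [Parts.a, Parts.b]

lemma Parts.distinct (T : Tup m) : Distinct7 (e.w T) (e.a T) (e.b T) :=
  ⟨fun _ _ h => ((e.a_eq).1 h).1, fun _ _ h => ((e.b_eq).1 h).1, e.a_ne_w T T, e.b_ne_w T T,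
    e.a_ne_b T T⟩

/-- The event that the spider selected by `T` persists throughout `G_s, …, G_t`. -/
def Parts.Sp (s t : ℕ) (T : Tup m) : Ordering n → Prop := SpiderEv (e.w T) (e.a T) (e.b T) s t

lemma Parts.count_le_spiderCount {s t t' : ℕ} (hs : s ≤ t') (ht : t' ≤ t) (σ : Ordering n) :
    (Finset.univ.filter fun T => e.Sp s t T σ).card ≤ spiderCount (processGraph n σ t') := by
  have hN : ∀ T, e.Sp s t T σ →
      ∀ j, (processGraph n σ t').neighborFinset (e.a T j) = {e.w T, e.b T j} := fun T hT =>
    (SpiderEv_iff (e.distinct T) t' σ).1 (SpiderEv.mono hT hs ht)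
  refine Finset.card_le_card_of_injOn (fun T => (e.w T, Finset.univ.image (e.a T))) ?_ ?_
  · intro T hT
    have hT' := hN T (by simpa using hT)
    have hD := e.distinct T
    simp only [Finset.coe_filter, Finset.mem_univ, true_and, Set.mem_ofPred_eq]
    refine ⟨?_, ?_, ?_⟩
    · rw [Finset.card_image_of_injective _ hD.inj_a]; simp
    · intro v hv
      obtain ⟨j, _, rfl⟩ := Finset.mem_image.1 hv
      constructor
      · rw [← SimpleGraph.card_neighborFinset_eq_degree, hT' j, Finset.card_pair (hD.bw j).symm]
      · refine SimpleGraph.Adj.symm ?_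
        rw [← SimpleGraph.mem_neighborFinset, hT' j]
        simp
    · let F : Option (Fin 3 ⊕ Fin 3) → Fin n := fun o => o.elim (e.w T) (Sum.elim (e.a T) (e.b T))
      have hF : Function.Injective F := by
        have h1 := hD.aw
        have h2 := hD.bw
        have h3 := hD.ab
        have h4 := fun i j => @hD.inj_a i j
        have h5 := fun i j => @hD.inj_b i j
        rintro (_ | i | i) (_ | j | j) h <;> simp [F] at h ⊢ <;> grind
      have : (insert (e.w T) (Finset.univ.image (e.a T)) ∪ (Finset.univ.image (e.a T)).biUnion
          fun v => (processGraph n σ t').neighborFinset v) = Finset.univ.image F := by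
        rw [Finset.image_biUnion]
        simp only [hT']
        ext v
        simp [F, Option.exists, eq_comm]
        grind
      rw [this, Finset.card_image_of_injective _ hF]
      simp
  · intro T hT T' hT' h
    have hT₁ := hN T (by simpa using hT)
    have hT₂ := hN T' (by simpa using hT')
    simp only [Prod.mk.injEq] at h
    have ha : ∀ j, T.2.1 j = T'.2.1 j := by
      intro j
      have : e.a T j ∈ Finset.univ.image (e.a T') := by rw [← h.2]; simp
      obtain ⟨i, _, hi⟩ := Finset.mem_image.1 this
      obtain ⟨rfl, hi⟩ := (e.a_eq).1 hi
      exact hi.symm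
    have hb : ∀ j, T.2.2 j = T'.2.2 j := by
      intro j
      have h1 := hT₁ j
      rw [(e.a_eq).2 ⟨rfl, ha j⟩, hT₂ j] at h1
      have : e.b T j ∈ ({e.w T', e.b T' j} : Finset (Fin n)) := by rw [h1]; simp
      simp only [Finset.mem_insert, Finset.mem_singleton, e.b_ne_w, false_or, e.b_eq] at this
      exact this.2
    exact Prod.ext ((e.w_eq).1 h.1) (Prod.ext (funext ha) (funext hb))

/-- The positions at which two choices have the same leg. -/
noncomputable def sameLegs (T T' : Tup m) : Finset (Fin 3) :=
  Finset.univ.filter fun j => T.2.1 j = T'.2.1 j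

/-- If two choices share a leg, the spiders can only coexist when the centres agree, and the
outer vertices agree at the common legs. -/
def Compat (T T' : Tup m) : Prop :=
  ∀ j ∈ sameLegs T T', T.1 = T'.1 ∧ T.2.2 j = T'.2.2 j

lemma Parts.compat_of_Sp {s t : ℕ} (hst : s ≤ t) {T T' : Tup m} {σ : Ordering n}
    (h : e.Sp s t T σ) (h' : e.Sp s t T' σ) : Compat T T' := by
  intro j hj
  have hj' : T.2.1 j = T'.2.1 j := by simpa [sameLegs] using hj
  have h1 := (SpiderEv_iff (e.distinct T) s σ).1 (SpiderEv.mono h le_rfl hst) j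
  have h2 := (SpiderEv_iff (e.distinct T') s σ).1 (SpiderEv.mono h' le_rfl hst) j
  rw [(e.a_eq).2 ⟨rfl, hj'⟩, h2] at h1
  have hw : e.w T ∈ ({e.w T', e.b T' j} : Finset (Fin n)) := by rw [h1]; simp
  have hb : e.b T j ∈ ({e.w T', e.b T' j} : Finset (Fin n)) := by rw [h1]; simp
  simp only [Finset.mem_insert, Finset.mem_singleton, e.w_eq, (e.b_ne_w _ _ _).symm, or_false,
    e.b_ne_w, false_or, e.b_eq, true_and] at hw hb
  exact ⟨hw, hb⟩

lemma Parts.card_legs_inter (T T' : Tup m) :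
    (legs (e.w T) (e.a T) (e.b T) ∩ legs (e.w T') (e.a T') (e.b T')).card
      ≤ 2 * (sameLegs T T').card := by
  rw [← Finset.card_map (Function.Embedding.subtype _)]
  have hsub : (legs (e.w T) (e.a T) (e.b T) ∩ legs (e.w T') (e.a T') (e.b T')).map
      (Function.Embedding.subtype _)
      ⊆ (sameLegs T T' ×ˢ Finset.univ).image (legEdge (e.w T) (e.a T) (e.b T)) := by
    intro x hx
    obtain ⟨y, hy, rfl⟩ := Finset.mem_map.1 hx
    obtain ⟨hy1, hy2⟩ := Finset.mem_inter.1 hy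
    obtain ⟨j, hj⟩ := mem_legs.1 hy1
    obtain ⟨i, hi⟩ := mem_legs.1 hy2
    have hmem : e.a T j ∈ y.1 := by rcases hj with hj | hj <;> rw [hj] <;> simp
    have hjS : j ∈ sameLegs T T' := by
      have : e.a T j = e.a T' i := by
        rcases hi with hi | hi <;> rw [hi] at hmem <;>
          simpa [e.a_ne_w, e.a_ne_b] using hmem
      obtain ⟨rfl, h⟩ := (e.a_eq).1 this
      simpa [sameLegs] using h
    rcases hj with hj | hj
    · exact Finset.mem_image.2 ⟨(j, false), by simpa using hjS, by simp [legEdge, hj]⟩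
    · exact Finset.mem_image.2 ⟨(j, true), by simpa using hjS, by simp [legEdge, hj]⟩
  refine (Finset.card_le_card hsub).trans (Finset.card_image_le.trans ?_)
  rw [Finset.card_product]
  simp [mul_comm]

/-- The joint probability of two spiders with `k` common legs: together they have at least
`12 - 2k` edges and exactly `6 - k` legs. -/
lemma Parts.pr_Sp_and_le {s t : ℕ} (hst : s ≤ t) (ht : t ≤ n.choose 2) (T T' : Tup m) :
    pr n (fun σ => e.Sp s t T σ ∧ e.Sp s t T' σ)
      ≤ earlyLate (n.choose 2) s t (12 - 2 * (sameLegs T T').card)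
        (incCard n (6 - (sameLegs T T').card) - 12) := by
  set A := legs (e.w T) (e.a T) (e.b T) with hA
  set A' := legs (e.w T') (e.a T') (e.b T') with hA'
  set S := Finset.univ.image (e.a T) with hS
  set S' := Finset.univ.image (e.a T') with hS'
  have hle : pr n (fun σ => e.Sp s t T σ ∧ e.Sp s t T' σ)
      ≤ pr n (Ev (A ∪ A') (inc (S ∪ S') \ (A ∪ A')) s t) := by
    refine pr_mono fun σ ⟨h, h'⟩ => ⟨fun x hx => ?_, fun x hx => ?_⟩
    · rcases Finset.mem_union.1 hx with hx | hx
      · exact h.1 x hx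
      · exact h'.1 x hx
    · simp only [Finset.mem_sdiff, Finset.mem_union, not_or] at hx
      obtain ⟨hx, hxA, hxA'⟩ := hx
      obtain ⟨v, hv, hvx⟩ := (Finset.mem_filter.1 hx).2
      rcases Finset.mem_union.1 hv with hv | hv
      · exact h.2 x (Finset.mem_sdiff.2
          ⟨Finset.mem_filter.2 ⟨Finset.mem_univ _, v, hv, hvx⟩, hxA⟩)
      · exact h'.2 x (Finset.mem_sdiff.2
          ⟨Finset.mem_filter.2 ⟨Finset.mem_univ _, v, hv, hvx⟩, hxA'⟩)
  have hcA : A.card = 6 := card_legs (e.distinct T)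
  have hcA' : A'.card = 6 := card_legs (e.distinct T')
  have hcU := Finset.card_union_add_card_inter A A'
  have hI : (A ∩ A').card ≤ 2 * (sameLegs T T').card := e.card_legs_inter T T'
  have hcS : S.card = 3 := by
    rw [hS, Finset.card_image_of_injective _ (e.distinct T).inj_a]; simp
  have hcS' : S'.card = 3 := by
    rw [hS', Finset.card_image_of_injective _ (e.distinct T').inj_a]; simp
  have hSI : S ∩ S' = (sameLegs T T').image (e.a T) := by
    ext v
    simp only [hS, hS', Finset.mem_inter, Finset.mem_image, Finset.mem_univ, true_and, sameLegs,
      Finset.mem_filter]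
    constructor
    · rintro ⟨⟨i, rfl⟩, ⟨j, h⟩⟩
      obtain ⟨rfl, h⟩ := (e.a_eq).1 h
      exact ⟨j, h.symm, rfl⟩
    · rintro ⟨j, h, rfl⟩
      exact ⟨⟨j, rfl⟩, ⟨j, (e.a_eq).2 ⟨rfl, h.symm⟩⟩⟩
  have hcSI : (S ∩ S').card = (sameLegs T T').card := by
    rw [hSI, Finset.card_image_of_injective _ (e.distinct T).inj_a]
  have hcSU := Finset.card_union_add_card_inter S S'
  have hSU : (S ∪ S').card = 6 - (sameLegs T T').card := by omega
  refine hle.trans (pr_Ev_le Finset.disjoint_sdiff hst ht (by omega) ?_)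
  have := Finset.le_card_sdiff (A ∪ A') (inc (S ∪ S'))
  rw [card_inc, hSU] at this
  omega

/-- The number of pairs of compatible choices sharing exactly the legs in `J`, bounded by its
order of magnitude. -/
def pairBound (m k : ℕ) : ℕ := if k = 0 then m ^ 14 else m ^ (13 - 2 * k)

lemma card_pairs_le (m : ℕ) (J : Finset (Fin 3)) :
    (Finset.univ.filter fun p : Tup m × Tup m =>
      sameLegs p.1 p.2 = J ∧ Compat p.1 p.2).card ≤ pairBound m J.card := by
  rcases J.eq_empty_or_nonempty with rfl | ⟨j₀, hj₀⟩
  · refine (Finset.card_le_univ _).trans (le_of_eq ?_)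
    simp [pairBound]
    ring
  · have hJ : J.card ≠ 0 := (Finset.card_pos.2 ⟨j₀, hj₀⟩).ne'
    have hJ3 : J.card ≤ 3 := by simpa using Finset.card_le_univ J
    have hJc : Fintype.card {j // j ∉ J} = 3 - J.card := by
      rw [Fintype.card_subtype_compl]; simp
    have hcod : Fintype.card (Tup m × ({j // j ∉ J} → Fin m) × ({j // j ∉ J} → Fin m))
        = pairBound m J.card := by
      simp only [Fintype.card_prod, Fintype.card_fun, Fintype.card_fin, hJc, pairBound, if_neg hJ]
      rw [← pow_add, ← pow_add, ← pow_succ', ← pow_add]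
      congr 1
      omega
    rw [← hcod, ← Finset.card_univ]
    -- the second choice is determined by the first one and its legs and outer vertices off `J`
    refine Finset.card_le_card_of_injOn
      (fun p => (p.1, (fun j => p.2.2.1 j), (fun j => p.2.2.2 j))) (by simp) ?_
    rintro ⟨T, T'⟩ hT ⟨U, U'⟩ hU h
    simp only [Finset.coe_filter, Finset.mem_univ, true_and, Set.mem_ofPred_eq] at hT hU
    simp only [Prod.mk.injEq] at h
    obtain ⟨rfl, ha, hb⟩ := h
    obtain ⟨hT1, hT2⟩ := hT
    obtain ⟨hU1, hU2⟩ := hU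
    unfold Compat at hT2 hU2
    rw [hT1] at hT2
    rw [hU1] at hU2
    have e1 : ∀ j ∈ J, T.2.1 j = T'.2.1 j := fun j hj => by
      rw [← hT1] at hj; simpa [sameLegs] using hj
    have e2 : ∀ j ∈ J, T.2.1 j = U'.2.1 j := fun j hj => by
      rw [← hU1] at hj; simpa [sameLegs] using hj
    refine Prod.ext rfl (Prod.ext ?_ (Prod.ext (funext fun j => ?_) (funext fun j => ?_)))
    · exact (hT2 j₀ hj₀).1.symm.trans (hU2 j₀ hj₀).1
    · by_cases hj : j ∈ J
      · exact (e1 j hj).symm.trans (e2 j hj)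
      · exact congrFun ha ⟨j, hj⟩
    · by_cases hj : j ∈ J
      · exact (hT2 j hj).2.symm.trans (hU2 j hj).2
      · exact congrFun hb ⟨j, hj⟩

lemma Parts.sum_pr_Sp_and_le {s t : ℕ} (hst : s ≤ t) (ht : t ≤ n.choose 2) :
    ∑ T, ∑ T', pr n (fun σ => e.Sp s t T σ ∧ e.Sp s t T' σ)
      ≤ ∑ J : Finset (Fin 3), (pairBound m J.card : ℝ)
        * earlyLate (n.choose 2) s t (12 - 2 * J.card) (incCard n (6 - J.card) - 12) := by
  let Q : Finset (Fin 3) → ℝ := fun J =>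
    earlyLate (n.choose 2) s t (12 - 2 * J.card) (incCard n (6 - J.card) - 12)
  have h1 : ∀ p : Tup m × Tup m, pr n (fun σ => e.Sp s t p.1 σ ∧ e.Sp s t p.2 σ)
      ≤ ∑ J : Finset (Fin 3), if sameLegs p.1 p.2 = J ∧ Compat p.1 p.2 then Q J else 0 := by
    intro p
    by_cases hc : Compat p.1 p.2
    · simpa [hc] using e.pr_Sp_and_le hst ht p.1 p.2
    · have : pr n (fun σ => e.Sp s t p.1 σ ∧ e.Sp s t p.2 σ) = 0 := by
        have : ∀ σ : Ordering n, ¬ (e.Sp s t p.1 σ ∧ e.Sp s t p.2 σ) := fun σ h =>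
          hc (e.compat_of_Sp hst h.1 h.2)
        simp [pr, this]
      rw [this]
      simp [hc]
  rw [← Fintype.sum_prod_type']
  refine (Finset.sum_le_sum fun p _ => h1 p).trans ?_
  rw [Finset.sum_comm]
  refine Finset.sum_le_sum fun J _ => ?_
  rw [← Finset.sum_filter, Finset.sum_const, nsmul_eq_mul]
  refine mul_le_mul_of_nonneg_right ?_ (earlyLate_nonneg _ _ _ _ _)
  exact_mod_cast card_pairs_le m J

lemma Parts.sum_pr_Sp {s t : ℕ} (hst : s ≤ t) (ht : t ≤ n.choose 2) :
    ∑ T, pr n (e.Sp s t T)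
      = (m : ℝ) ^ 7 * earlyLate (n.choose 2) s t 6 (incCard n 3 - 6) := by
  have : ∀ T, pr n (e.Sp s t T) = earlyLate (n.choose 2) s t 6 (incCard n 3 - 6) := fun T =>
    pr_SpiderEv (e.distinct T) hst ht
  simp only [this, Finset.sum_const, Finset.card_univ]
  simp only [Fintype.card_prod, Fintype.card_fun, Fintype.card_fin, nsmul_eq_mul]
  push_cast
  ring

end Parts

/-- Chebyshev's inequality for the number of events that hold among a finite family. -/
lemma pr_count_lt_le {n : ℕ} {ι : Type*} [Fintype ι] (P : ι → Ordering n → Prop) {μ M : ℝ}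
    (hμ : ∑ i, pr n (P i) = μ) (hM : ∑ i, ∑ j, pr n (fun σ => P i σ ∧ P j σ) ≤ M) {r : ℕ}
    (hr : (r : ℝ) < μ) :
    pr n (fun σ => (Finset.univ.filter fun i => P i σ).card < r) ≤ (M - μ ^ 2) / (μ - r) ^ 2 := by
  have hp := card_Ordering_pos n
  let c : Ordering n → ℝ := fun σ => ∑ i, if P i σ then (1 : ℝ) else 0
  have hc : ∀ σ, c σ = (Finset.univ.filter fun i => P i σ).card := fun σ => by simp [c]
  have hind : ∀ Q : Ordering n → Prop, ∑ σ, (if Q σ then (1 : ℝ) else 0)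
      = Fintype.card (Ordering n) * pr n Q := by
    intro Q
    rw [pr, mul_div_cancel₀ _ hp.ne']
    simp
  have h1 : ∑ σ, c σ = Fintype.card (Ordering n) * μ := by
    simp only [c]
    rw [Finset.sum_comm, ← hμ, Finset.mul_sum]
    exact Finset.sum_congr rfl fun i _ => hind _
  have h2 : ∑ σ, c σ ^ 2 ≤ Fintype.card (Ordering n) * M := by
    have : ∑ σ, c σ ^ 2 = Fintype.card (Ordering n)
        * ∑ i, ∑ j, pr n (fun σ => P i σ ∧ P j σ) := by
      simp only [c, sq, Finset.sum_mul_sum]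
      rw [Finset.sum_comm, Finset.mul_sum]
      refine Finset.sum_congr rfl fun i _ => ?_
      rw [Finset.sum_comm, Finset.mul_sum]
      refine Finset.sum_congr rfl fun j _ => ?_
      rw [← hind]
      refine Finset.sum_congr rfl fun σ _ => ?_
      by_cases h : P i σ <;> by_cases h' : P j σ <;> simp [h, h']
    rw [this]
    gcongr
  have h3 : ∑ σ, (c σ - μ) ^ 2 ≤ Fintype.card (Ordering n) * (M - μ ^ 2) := by
    have : ∑ σ, (c σ - μ) ^ 2 = ∑ σ, c σ ^ 2 - 2 * μ * ∑ σ, c σ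
        + Fintype.card (Ordering n) * μ ^ 2 := by
      rw [Finset.mul_sum, ← Finset.sum_sub_distrib, ← nsmul_eq_mul, ← Finset.card_univ,
        ← Finset.sum_const, ← Finset.sum_add_distrib]
      exact Finset.sum_congr rfl fun σ _ => by ring
    rw [this, h1]
    nlinarith
  have h4 : Fintype.card (Ordering n)
      * pr n (fun σ => (Finset.univ.filter fun i => P i σ).card < r) * (μ - r) ^ 2
      ≤ ∑ σ, (c σ - μ) ^ 2 := by
    rw [← hind, Finset.sum_mul]
    refine Finset.sum_le_sum fun σ _ => ?_
    split_ifs with h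
    · have h' : c σ < r := by rw [hc]; exact_mod_cast h
      nlinarith
    · rw [zero_mul]; positivity
  rw [le_div_iff₀ (by have := sub_pos.2 hr; positivity)]
  have h5 := h4.trans h3
  rw [mul_assoc] at h5
  exact le_of_mul_le_mul_left h5 hp

/-! ### Asymptotics of the single and joint spider probabilities -/

lemma choose_two_add (p k : ℕ) : (p + k).choose 2 = p.choose 2 + k * p + k.choose 2 := by
  induction k with
  | zero => simp
  | succ k ih =>
    rw [← add_assoc, Nat.choose_succ_succ' (p + k) 1, ih, Nat.choose_succ_succ' k 1]
    simp
    ring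

lemma incCard_bounds {n k : ℕ} (h : k ≤ n) :
    incCard n k ≤ k * n ∧ k * n ≤ incCard n k + k * k := by
  obtain ⟨p, rfl⟩ := Nat.exists_eq_add_of_le' h
  have h1 : incCard (p + k) k = k * p + k.choose 2 := by
    unfold incCard
    rw [choose_two_add, Nat.add_sub_cancel]
    omega
  have h2 : k.choose 2 ≤ k * k := by
    simpa [sq] using Nat.choose_le_pow k 2
  rw [h1]
  constructor <;> nlinarith

/-- Elementary estimates for `(N-t)^{(b)} / N^{(b)} = ∏_{j<b} (1 - t/(N-j))`. -/
lemma descFactorial_ratio_bounds {N t b : ℕ} (h : t + b < N) :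
    Real.exp (-((b : ℝ) * (t / ((N : ℝ) - b - t))))
      ≤ ((N - t).descFactorial b : ℝ) / (N.descFactorial b : ℝ) ∧
    ((N - t).descFactorial b : ℝ) / (N.descFactorial b : ℝ)
      ≤ Real.exp (-((b : ℝ) * (t / (N : ℝ)))) := by
  have hN : (t : ℝ) + b < N := by exact_mod_cast h
  have ht0 : (0 : ℝ) ≤ t := Nat.cast_nonneg t
  have hb0 : (0 : ℝ) ≤ b := Nat.cast_nonneg b
  have hprod : ((N - t).descFactorial b : ℝ) / (N.descFactorial b : ℝ)
      = ∏ j ∈ Finset.range b, (((N : ℝ) - t - j) / ((N : ℝ) - j)) := by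
    rw [Nat.descFactorial_eq_prod_range, Nat.descFactorial_eq_prod_range, Nat.cast_prod,
      Nat.cast_prod, ← Finset.prod_div_distrib]
    refine Finset.prod_congr rfl fun j hj => ?_
    have hj := Finset.mem_range.1 hj
    rw [Nat.cast_sub (by omega), Nat.cast_sub (by omega), Nat.cast_sub (by omega)]
  have hconst : ∀ x : ℝ, Real.exp (-((b : ℝ) * x)) = ∏ _j ∈ Finset.range b, Real.exp (-x) := by
    intro x
    rw [Finset.prod_const, Finset.card_range, ← Real.exp_nat_mul]
    congr 1
    ring
  have hj' : ∀ j ∈ Finset.range b, (j : ℝ) + 1 ≤ b := fun j hj => by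
    exact_mod_cast Finset.mem_range.1 hj
  rw [hprod, hconst, hconst]
  constructor
  · refine Finset.prod_le_prod (fun _ _ => (Real.exp_pos _).le) fun j hj => ?_
    have hj := hj' j hj
    have hj0 : (0 : ℝ) ≤ j := Nat.cast_nonneg j
    have hp : (0 : ℝ) < (N : ℝ) - t - j := by linarith
    have hq : (0 : ℝ) < (N : ℝ) - j := by linarith
    have h1 : ((N : ℝ) - j) / ((N : ℝ) - t - j) ≤ Real.exp (t / ((N : ℝ) - b - t)) := by
      have : ((N : ℝ) - j) / ((N : ℝ) - t - j) = t / ((N : ℝ) - t - j) + 1 := by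
        field_simp; ring
      rw [this]
      refine (Real.add_one_le_exp _).trans (Real.exp_le_exp.2 ?_)
      exact div_le_div_of_nonneg_left ht0 (by linarith) (by linarith)
    rw [Real.exp_neg, ← inv_div ((N : ℝ) - j) ((N : ℝ) - t - j)]
    exact inv_anti₀ (by positivity) h1
  · refine Finset.prod_le_prod (fun j hj => ?_) fun j hj => ?_
    · have hj := hj' j hj
      exact div_nonneg (by linarith) (by linarith)
    · have hj := hj' j hj
      have hj0 : (0 : ℝ) ≤ j := Nat.cast_nonneg j
      have hq : (0 : ℝ) < (N : ℝ) - j := by linarith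
      have : ((N : ℝ) - t - j) / ((N : ℝ) - j) = -(t / ((N : ℝ) - j)) + 1 := by
        field_simp; ring
      rw [this]
      refine (Real.add_one_le_exp _).trans (Real.exp_le_exp.2 (neg_le_neg ?_))
      exact div_le_div_of_nonneg_left ht0 hq (by linarith)

/-- The order of magnitude of the probability that `a` given edges are among the first `s` edges
and no further edge at `k` given vertices is among the first `t` edges. -/
noncomputable def scale (n s t a k : ℕ) : ℝ :=
  (2 * (s : ℝ) / (n : ℝ) ^ 2) ^ a * Real.exp (-(2 * (t : ℝ) / n)) ^ k

lemma cast_choose_two' (n : ℕ) : ((n.choose 2 : ℕ) : ℝ) = (n : ℝ) * (n - 1) / 2 :=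
  Nat.cast_choose_two ℝ n

section Asymptotics

variable {s t b : ℕ → ℕ}

lemma eventually_lt_mul_sq (ht : Tendsto (fun n => (t n : ℝ) ^ 2 / (n : ℝ) ^ 3) atTop (nhds 0))
    {k : ℕ} (hb : ∀ᶠ n in atTop, b n ≤ k * n) :
    ∀ᶠ n : ℕ in atTop, (n : ℝ) ^ 2 / 4 ≤ (n.choose 2 : ℝ) - b n - t n := by
  have h1 : ∀ᶠ n : ℕ in atTop, (t n : ℝ) ^ 2 / (n : ℝ) ^ 3 < 1 := ht.eventually_lt_const one_pos
  filter_upwards [h1, hb, eventually_ge_atTop (2000 * (k + 1))] with n h1 hb hn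
  have hn' : (2000 : ℝ) * (k + 1) ≤ n := by exact_mod_cast hn
  have hb' : (b n : ℝ) ≤ k * n := by exact_mod_cast hb
  have hk : (0 : ℝ) ≤ k := Nat.cast_nonneg k
  have hn0 : (2000 : ℝ) ≤ n := by linarith
  have hnp : (0 : ℝ) < n := by linarith
  rw [div_lt_one (by positivity)] at h1
  have h2 : (t n : ℝ) ≤ (n : ℝ) ^ 2 / 16 := by
    by_contra! hlt
    have h3 := pow_lt_pow_left₀ hlt (by positivity) two_ne_zero
    nlinarith [pow_pos hnp 3]
  rw [cast_choose_two']
  nlinarith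

lemma tendsto_earlyLate_div_scale (a k C : ℕ) (hs : Tendsto s atTop atTop)
    (ht : Tendsto (fun n => (t n : ℝ) ^ 2 / (n : ℝ) ^ 3) atTop (nhds 0))
    (hb : ∀ᶠ n in atTop, b n ≤ k * n ∧ k * n ≤ b n + C) :
    Tendsto (fun n => earlyLate (n.choose 2) (s n) (t n) a (b n) / scale n (s n) (t n) a k)
      atTop (nhds 1) := by
  have hN := eventually_lt_mul_sq ht (hb.mono fun n h => h.1)
  -- the edges required to be present
  have F1 : Tendsto (fun n => ((s n).descFactorial a : ℝ) / (s n : ℝ) ^ a) atTop (nhds 1) := by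
    have h := (Asymptotics.isEquivalent_iff_tendsto_one ?_).1 (isEquivalent_descFactorial a)
    · exact h.comp hs
    · filter_upwards [eventually_gt_atTop 0] with n hn
      positivity
  have hNb : Tendsto (fun n : ℕ => n.choose 2 - b n) atTop atTop := by
    rw [← tendsto_natCast_atTop_iff (R := ℝ)]
    have h0 : Tendsto (fun n : ℕ => (n : ℝ) ^ 2 / 4) atTop atTop :=
      ((tendsto_pow_atTop two_ne_zero).comp tendsto_natCast_atTop_atTop).atTop_div_const
        (by norm_num)
    refine tendsto_atTop_mono' _ ?_ h0
    filter_upwards [hN] with n hn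
    have h1 : (0 : ℝ) ≤ t n := Nat.cast_nonneg _
    have h2 : (b n : ℝ) ≤ (n.choose 2 : ℝ) := by nlinarith [sq_nonneg (n : ℝ)]
    rw [Nat.cast_sub (by exact_mod_cast h2)]
    linarith
  have F2a : Tendsto (fun n : ℕ => ((n.choose 2 - b n).descFactorial a : ℝ)
      / ((n.choose 2 - b n : ℕ) : ℝ) ^ a) atTop (nhds 1) := by
    have h := (Asymptotics.isEquivalent_iff_tendsto_one ?_).1 (isEquivalent_descFactorial a)
    · exact h.comp hNb
    · filter_upwards [eventually_gt_atTop 0] with n hn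
      positivity
  have F2b : Tendsto (fun n : ℕ => ((n.choose 2 - b n : ℕ) : ℝ) / ((n : ℝ) ^ 2 / 2)) atTop
      (nhds 1) := by
    have hinv : Tendsto (fun n : ℕ => ((n : ℝ))⁻¹) atTop (nhds 0) := tendsto_inv_atTop_nhds_zero_nat
    have hlow : Tendsto (fun n : ℕ => 1 - (2 * k + 1) * ((n : ℝ))⁻¹) atTop (nhds 1) := by
      simpa using (hinv.const_mul (2 * (k : ℝ) + 1)).const_sub 1
    refine tendsto_of_tendsto_of_tendsto_of_le_of_le' hlow tendsto_const_nhds ?_ ?_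
    · filter_upwards [hb, hN, eventually_gt_atTop 0] with n hb hN hn
      have hnp : (0 : ℝ) < n := by exact_mod_cast hn
      have hb' : (b n : ℝ) ≤ k * n := by exact_mod_cast hb.1
      have h1 : (0 : ℝ) ≤ t n := Nat.cast_nonneg _
      have h2 : (b n : ℝ) ≤ (n.choose 2 : ℝ) := by nlinarith [sq_nonneg (n : ℝ)]
      rw [Nat.cast_sub (by exact_mod_cast h2), le_div_iff₀ (by positivity), cast_choose_two']
      have : (1 - (2 * (k : ℝ) + 1) * ((n : ℝ))⁻¹) * ((n : ℝ) ^ 2 / 2)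
          = (n : ℝ) ^ 2 / 2 - (2 * k + 1) * n / 2 := by field_simp
      rw [this]
      nlinarith
    · filter_upwards [eventually_gt_atTop 0] with n hn
      have hnp : (0 : ℝ) < n := by exact_mod_cast hn
      rw [div_le_one (by positivity)]
      have h1 : ((n.choose 2 - b n : ℕ) : ℝ) ≤ (n.choose 2 : ℝ) := by exact_mod_cast Nat.sub_le _ _
      refine h1.trans ?_
      rw [cast_choose_two']
      nlinarith
  have F2 : Tendsto (fun n : ℕ => ((n.choose 2 - b n).descFactorial a : ℝ)
      / ((n : ℝ) ^ 2 / 2) ^ a) atTop (nhds 1) := by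
    have h := F2a.mul (F2b.pow a)
    rw [one_pow, one_mul] at h
    refine h.congr' ?_
    filter_upwards [hNb.eventually_gt_atTop 0] with n hn
    have : (0 : ℝ) < ((n.choose 2 - b n : ℕ) : ℝ) := by exact_mod_cast hn
    rw [div_pow]
    field_simp
  -- the edges required to be absent
  have hq : Tendsto (fun n : ℕ => (t n : ℝ) ^ 2 / (n : ℝ) ^ 3 + ((n : ℝ))⁻¹) atTop (nhds 0) := by
    simpa using ht.add tendsto_inv_atTop_nhds_zero_nat
  set q : ℕ → ℝ := fun n => (t n : ℝ) ^ 2 / (n : ℝ) ^ 3 + ((n : ℝ))⁻¹ with hqdef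
  have F3 : Tendsto (fun n : ℕ => ((n.choose 2 - t n).descFactorial (b n) : ℝ)
      / ((n.choose 2).descFactorial (b n) : ℝ) / Real.exp (-(2 * (t n : ℝ) / n)) ^ k)
      atTop (nhds 1) := by
    let D : ℝ := 4 * (C + k) + 16 * k ^ 2 + 16 * k
    have hlow : Tendsto (fun n => Real.exp (-(D * q n))) atTop (nhds 1) := by
      have := (hq.const_mul D).neg.rexp
      simpa using this
    have hup : Tendsto (fun n => Real.exp (4 * (C + k) * q n)) atTop (nhds 1) := by
      have := (hq.const_mul (4 * ((C : ℝ) + k))).rexp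
      simpa using this
    have hexp : ∀ n : ℕ, Real.exp (-(2 * (t n : ℝ) / n)) ^ k
        = Real.exp (-(k * (2 * (t n : ℝ) / n))) := fun n => by
      rw [← Real.exp_nat_mul]; congr 1; ring
    have main : ∀ᶠ n : ℕ in atTop,
        Real.exp (-(D * q n)) ≤ ((n.choose 2 - t n).descFactorial (b n) : ℝ)
          / ((n.choose 2).descFactorial (b n) : ℝ) / Real.exp (-(2 * (t n : ℝ) / n)) ^ k ∧
        ((n.choose 2 - t n).descFactorial (b n) : ℝ)
          / ((n.choose 2).descFactorial (b n) : ℝ) / Real.exp (-(2 * (t n : ℝ) / n)) ^ k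
          ≤ Real.exp (4 * (C + k) * q n) := by
      filter_upwards [hb, hN, eventually_gt_atTop 1] with n hb hN hn
      have hn1 : (1 : ℝ) < n := by exact_mod_cast hn
      have hnp : (0 : ℝ) < n := by linarith
      have hb1 : (b n : ℝ) ≤ k * n := by exact_mod_cast hb.1
      have hb2 : (k : ℝ) * n ≤ b n + C := by exact_mod_cast hb.2
      have hb0 : (0 : ℝ) ≤ b n := Nat.cast_nonneg _
      have ht0 : (0 : ℝ) ≤ t n := Nat.cast_nonneg _
      have hk0 : (0 : ℝ) ≤ k := Nat.cast_nonneg _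
      have hC0 : (0 : ℝ) ≤ C := Nat.cast_nonneg _
      have hn2 : (0 : ℝ) < (n : ℝ) ^ 2 := by positivity
      have hlt : t n + b n < n.choose 2 := by
        have : (t n : ℝ) + b n < (n.choose 2 : ℝ) := by linarith
        exact_mod_cast this
      have hND := hN
      have hNN : (n : ℝ) ^ 2 / 4 ≤ (n.choose 2 : ℝ) := by linarith
      obtain ⟨hl, hu⟩ := descFactorial_ratio_bounds hlt
      -- `t ≤ q n²`, since `t n ≤ t² + n²`
      have htq : (t n : ℝ) / (n : ℝ) ^ 2 ≤ q n := by
        have : q n = ((t n : ℝ) ^ 2 + (n : ℝ) ^ 2) / (n : ℝ) ^ 3 := by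
          simp only [hqdef]; field_simp
        rw [this, div_le_div_iff₀ hn2 (by positivity)]
        nlinarith [sq_nonneg ((t n : ℝ) - n), mul_nonneg ht0 hnp.le]
      have htq2 : (t n : ℝ) ^ 2 / (n : ℝ) ^ 3 ≤ q n := by
        simp only [hqdef]; simp
      have hq0 : 0 ≤ q n := le_trans (by positivity) htq
      set N : ℝ := (n.choose 2 : ℝ) with hNdef
      have hNpos : 0 < N := by linarith [div_pos hn2 (by norm_num : (0 : ℝ) < 4)]
      have hDpos : 0 < N - b n - t n := by linarith [div_pos hn2 (by norm_num : (0 : ℝ) < 4)]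
      have htN : (t n : ℝ) / N ≤ 4 * q n := by
        calc (t n : ℝ) / N ≤ t n / ((n : ℝ) ^ 2 / 4) :=
              div_le_div_of_nonneg_left ht0 (by positivity) hNN
          _ = 4 * ((t n : ℝ) / (n : ℝ) ^ 2) := by field_simp
          _ ≤ 4 * q n := by linarith
      have htN0 : 0 ≤ (t n : ℝ) / N := by positivity
      have e1 : (k : ℝ) * (2 * (t n : ℝ) / n) - b n * (t n / N)
          = (t n / N) * (k * n - b n - k) := by
        have hNe : N = (n : ℝ) * (n - 1) / 2 := cast_choose_two' n
        have hn1' : (n : ℝ) - 1 ≠ 0 := by linarith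
        rw [hNe]
        field_simp
        ring
      have e1u : (t n / N) * (k * n - b n - k) ≤ 4 * (C + k) * q n := by
        calc (t n / N) * (k * n - b n - k) ≤ (t n / N) * (C + k) :=
              mul_le_mul_of_nonneg_left (by linarith) htN0
          _ ≤ 4 * q n * (C + k) := mul_le_mul_of_nonneg_right htN (by linarith)
          _ = _ := by ring
      have e1l : -(4 * (C + k) * q n) ≤ (t n / N) * (k * n - b n - k) := by
        have : (t n / N) * (C + k) ≤ 4 * q n * (C + k) :=
          mul_le_mul_of_nonneg_right htN (by linarith)
        have h2 : (t n / N) * (-(C + k)) ≤ (t n / N) * (k * n - b n - k) :=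
          mul_le_mul_of_nonneg_left (by linarith) htN0
        linarith
      have e2 : (b n : ℝ) * (t n / (N - b n - t n)) - b n * (t n / N)
          = (b n ^ 2 * t n + b n * t n ^ 2) / (N * (N - b n - t n)) := by
        field_simp
        ring
      have e2u : ((b n : ℝ) ^ 2 * t n + b n * t n ^ 2) / (N * (N - b n - t n))
          ≤ (16 * k ^ 2 + 16 * k) * q n := by
        calc ((b n : ℝ) ^ 2 * t n + b n * t n ^ 2) / (N * (N - b n - t n))
            ≤ ((b n : ℝ) ^ 2 * t n + b n * t n ^ 2) / ((n : ℝ) ^ 2 / 4 * ((n : ℝ) ^ 2 / 4)) := by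
              gcongr
          _ ≤ ((k * n : ℝ) ^ 2 * t n + (k * n) * t n ^ 2)
                / ((n : ℝ) ^ 2 / 4 * ((n : ℝ) ^ 2 / 4)) := by
              gcongr
          _ = 16 * k ^ 2 * ((t n : ℝ) / (n : ℝ) ^ 2)
                + 16 * k * ((t n : ℝ) ^ 2 / (n : ℝ) ^ 3) := by
              field_simp
              ring
          _ ≤ 16 * k ^ 2 * q n + 16 * k * q n := by gcongr
          _ = _ := by ring
      rw [hexp, le_div_iff₀ (Real.exp_pos _), div_le_iff₀ (Real.exp_pos _), ← Real.exp_add,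
        ← Real.exp_add]
      constructor
      · refine le_trans (Real.exp_le_exp.2 ?_) hl
        simp only [D]
        linarith
      · refine hu.trans (Real.exp_le_exp.2 ?_)
        linarith
    exact tendsto_of_tendsto_of_tendsto_of_le_of_le' hlow hup (main.mono fun n h => h.1)
      (main.mono fun n h => h.2)
  have hall := (F1.mul (F2.inv₀ one_ne_zero)).mul F3
  simp only [inv_one, mul_one] at hall
  refine hall.congr' ?_
  filter_upwards [hs.eventually_gt_atTop 0, eventually_gt_atTop 0, hN] with n hsn hn hN
  have hsp : (0 : ℝ) < s n := by exact_mod_cast hsn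
  have hnp : (0 : ℝ) < n := by exact_mod_cast hn
  have hsplit := Nat.descFactorial_mul_descFactorial (n := n.choose 2) (Nat.le_add_left (b n) a)
  rw [Nat.add_sub_cancel] at hsplit
  rw [earlyLate, ← hsplit, scale]
  push_cast
  rw [div_pow, div_pow, mul_pow, inv_div]
  field_simp

end Asymptotics

/-! ### Persistence of many spiders throughout a window -/

section Window

lemma tendsto_mul_pow_atTop {m z : ℕ → ℝ} (hm : Tendsto m atTop atTop) (hm0 : ∀ n, 0 ≤ m n)
    (hz : ∀ n, 0 ≤ z n) (h3 : Tendsto (fun n => m n * z n ^ 3) atTop atTop) {k : ℕ} (hk : k ≤ 3) :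
    Tendsto (fun n => m n * z n ^ k) atTop atTop := by
  refine tendsto_atTop.2 fun B => ?_
  filter_upwards [hm.eventually_ge_atTop B, h3.eventually_ge_atTop B] with n h1 h2
  rcases le_total 1 (z n) with h | h
  · exact h1.trans (le_mul_of_one_le_right (hm0 n) (one_le_pow₀ h))
  · exact h2.trans (mul_le_mul_of_nonneg_left (pow_le_pow_of_le_one (hz n) h hk) (hm0 n))

lemma tendsto_div_seven : Tendsto (fun n : ℕ => ((n / 7 : ℕ) : ℝ)) atTop atTop :=
  tendsto_natCast_atTop_atTop.comp (Nat.tendsto_div_const_atTop (by norm_num))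

lemma eventually_incCard_bounds (k c : ℕ) (hc : c ≤ 12) (hk : k ≤ 6) :
    ∀ᶠ n in atTop, incCard n k - c ≤ k * n ∧ k * n ≤ incCard n k - c + 60 := by
  filter_upwards [eventually_ge_atTop k] with n hn
  have h := incCard_bounds hn
  have : k * k ≤ 6 * 6 := Nat.mul_le_mul hk hk
  omega

variable {s t : ℕ → ℕ}

/-- The expected number of spiders that persist throughout a window is unbounded. -/
lemma tendsto_first_moment_scale
    (hH : Tendsto (fun n : ℕ => (n : ℝ) * ((s n : ℝ) / n) ^ 6 * Real.exp (-(2 * (t n : ℝ) / n)) ^ 3)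
      atTop atTop) :
    Tendsto (fun n => ((n / 7 : ℕ) : ℝ) ^ 7 * scale n (s n) (t n) 6 3) atTop atTop := by
  refine tendsto_atTop_mono' _ ?_ (hH.const_mul_atTop (by norm_num : (0 : ℝ) < 64 / 8 ^ 7))
  filter_upwards [eventually_ge_atTop 60] with n hn
  have hnp : (0 : ℝ) < n := by exact_mod_cast (by omega : 0 < n)
  have hm : (n : ℝ) / 8 ≤ ((n / 7 : ℕ) : ℝ) := by
    rw [div_le_iff₀ (by norm_num)]
    exact_mod_cast (by omega : n ≤ n / 7 * 8)
  have he := Real.exp_pos (-(2 * (t n : ℝ) / n))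
  calc (64 / 8 ^ 7 : ℝ) * ((n : ℝ) * ((s n : ℝ) / n) ^ 6 * Real.exp (-(2 * (t n : ℝ) / n)) ^ 3)
      = ((n : ℝ) / 8) ^ 7 * scale n (s n) (t n) 6 3 := by
        rw [scale]
        field_simp
        ring
    _ ≤ _ := by
        have : 0 ≤ scale n (s n) (t n) 6 3 := by rw [scale]; positivity
        gcongr

/-- The contribution to the second moment of the pairs of spiders sharing `k` legs, relative to the
square of the first moment. -/
lemma tendsto_pair_ratio (hs : Tendsto s atTop atTop)
    (ht : Tendsto (fun n => (t n : ℝ) ^ 2 / (n : ℝ) ^ 3) atTop (nhds 0))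
    (hH : Tendsto (fun n : ℕ => (n : ℝ) * ((s n : ℝ) / n) ^ 6 * Real.exp (-(2 * (t n : ℝ) / n)) ^ 3)
      atTop atTop) {k : ℕ} (hk : k ≤ 3) :
    Tendsto (fun n => (pairBound (n / 7) k : ℝ)
        * earlyLate (n.choose 2) (s n) (t n) (12 - 2 * k) (incCard n (6 - k) - 12)
        / (((n / 7 : ℕ) : ℝ) ^ 7 * earlyLate (n.choose 2) (s n) (t n) 6 (incCard n 3 - 6)) ^ 2)
      atTop (nhds (if k = 0 then 1 else 0)) := by
  have h1 := tendsto_earlyLate_div_scale 6 3 60 hs ht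
    (eventually_incCard_bounds 3 6 (by norm_num) (by norm_num))
  have h2 := tendsto_earlyLate_div_scale (12 - 2 * k) (6 - k) 60 hs ht
    (eventually_incCard_bounds (6 - k) 12 (by norm_num) (by omega))
  have hpos : ∀ᶠ n in atTop, 0 < s n ∧ 0 < n / 7 ∧ 0 < n := by
    filter_upwards [hs.eventually_gt_atTop 0, eventually_ge_atTop 7] with n h h7
    omega
  -- the same ratio with every probability replaced by its order of magnitude
  have h3 : Tendsto (fun n => (pairBound (n / 7) k : ℝ)
        * scale n (s n) (t n) (12 - 2 * k) (6 - k)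
        / (((n / 7 : ℕ) : ℝ) ^ 7 * scale n (s n) (t n) 6 3) ^ 2)
      atTop (nhds (if k = 0 then 1 else 0)) := by
    let m : ℕ → ℝ := fun n => ((n / 7 : ℕ) : ℝ)
    let z : ℕ → ℝ := fun n => m n ^ 2 * (2 * (s n : ℝ) / (n : ℝ) ^ 2) ^ 2
      * Real.exp (-(2 * (t n : ℝ) / n))
    have hmz : Tendsto (fun n => m n * z n ^ 3) atTop atTop := by
      refine (tendsto_first_moment_scale hH).congr fun n => ?_
      simp only [m, z, scale]
      ring
    have hk' := tendsto_mul_pow_atTop tendsto_div_seven (fun n => Nat.cast_nonneg _)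
      (fun n => by positivity) hmz hk
    by_cases h0 : k = 0
    · subst h0
      refine Tendsto.congr' ?_ tendsto_const_nhds
      filter_upwards [hpos] with n hn
      obtain ⟨hs0, hm0, hn0⟩ := hn
      have hs0' : (0 : ℝ) < s n := by exact_mod_cast hs0
      have hm0' : (0 : ℝ) < ((n / 7 : ℕ) : ℝ) := by exact_mod_cast hm0
      have hn0' : (0 : ℝ) < n := by exact_mod_cast hn0
      have he := Real.exp_pos (-(2 * (t n : ℝ) / n))
      simp only [pairBound, scale, if_true, Nat.cast_pow, Nat.mul_zero, Nat.sub_zero]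
      field_simp
    · rw [if_neg h0]
      refine hk'.inv_tendsto_atTop.congr' ?_
      filter_upwards [hpos] with n hn
      obtain ⟨hs0, hm0, hn0⟩ := hn
      have hs0' : (0 : ℝ) < s n := by exact_mod_cast hs0
      have hm0' : (0 : ℝ) < ((n / 7 : ℕ) : ℝ) := by exact_mod_cast hm0
      have hn0' : (0 : ℝ) < n := by exact_mod_cast hn0
      have he := Real.exp_pos (-(2 * (t n : ℝ) / n))
      have hx : (0 : ℝ) < 2 * (s n : ℝ) / (n : ℝ) ^ 2 := by positivity
      simp only [pairBound, scale, if_neg h0, Nat.cast_pow, m, z, Pi.inv_apply]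
      generalize 2 * (s n : ℝ) / (n : ℝ) ^ 2 = x at hx
      generalize Real.exp (-(2 * (t n : ℝ) / n)) = y at he
      generalize ((n / 7 : ℕ) : ℝ) = w at hm0'
      rw [inv_eq_one_div, div_eq_div_iff (by positivity) (by positivity)]
      have h13 : w ^ (13 - 2 * k) * (w * (w ^ 2) ^ k) = w ^ 14 := by
        rw [← pow_mul, ← pow_succ', ← pow_add]; congr 1; omega
      have h12 : x ^ (12 - 2 * k) * (x ^ 2) ^ k = x ^ 12 := by
        rw [← pow_mul, ← pow_add]; congr 1; omega
      have h6 : y ^ (6 - k) * y ^ k = y ^ 6 := by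
        rw [← pow_add]; congr 1; omega
      calc 1 * (w ^ 7 * (x ^ 6 * y ^ 3)) ^ 2 = w ^ 14 * x ^ 12 * y ^ 6 := by ring
        _ = w ^ (13 - 2 * k) * (w * (w ^ 2) ^ k) * (x ^ (12 - 2 * k) * (x ^ 2) ^ k)
              * (y ^ (6 - k) * y ^ k) := by rw [h13, h12, h6]
        _ = _ := by rw [mul_pow, mul_pow]; ring
  have h4 := h3.mul (h2.mul ((h1.pow 2).inv₀ (by norm_num)))
  simp only [one_pow, inv_one, mul_one] at h4
  refine h4.congr' ?_
  filter_upwards [hpos] with n hn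
  obtain ⟨hs0, hm0, hn0⟩ := hn
  have hs0' : (0 : ℝ) < s n := by exact_mod_cast hs0
  have hn0' : (0 : ℝ) < n := by exact_mod_cast hn0
  have hsc : ∀ a j, scale n (s n) (t n) a j ≠ 0 := fun a j => by
    rw [scale]
    have he := Real.exp_pos (-(2 * (t n : ℝ) / n))
    positivity
  have e1 := hsc 6 3
  have e2 := hsc (12 - 2 * k) (6 - k)
  generalize scale n (s n) (t n) 6 3 = u at e1
  generalize scale n (s n) (t n) (12 - 2 * k) (6 - k) = v at e2
  rw [mul_pow, mul_pow, div_pow, inv_div]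
  by_cases e3 : earlyLate (n.choose 2) (s n) (t n) 6 (incCard n 3 - 6) = 0
  · simp [e3]
  · have hm0' : (0 : ℝ) < ((n / 7 : ℕ) : ℝ) := by exact_mod_cast hm0
    field_simp

/-- With high probability at least `r` spiders of the partite family are present at all times of
the window `[s, t]`, provided that the expected number of such spiders tends to infinity. -/
lemma tendsto_window (hs : Tendsto s atTop atTop) (hst : ∀ᶠ n in atTop, s n ≤ t n)
    (ht : Tendsto (fun n => (t n : ℝ) ^ 2 / (n : ℝ) ^ 3) atTop (nhds 0))
    (hH : Tendsto (fun n : ℕ => (n : ℝ) * ((s n : ℝ) / n) ^ 6 * Real.exp (-(2 * (t n : ℝ) / n)) ^ 3)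
      atTop atTop) (r : ℕ) :
    Tendsto (fun n => pr n fun σ => ∀ t', s n ≤ t' → t' ≤ t n →
      r ≤ spiderCount (processGraph n σ t')) atTop (nhds 1) := by
  let μ : ℕ → ℝ := fun n =>
    ((n / 7 : ℕ) : ℝ) ^ 7 * earlyLate (n.choose 2) (s n) (t n) 6 (incCard n 3 - 6)
  let M : ℕ → ℝ := fun n => ∑ J : Finset (Fin 3), (pairBound (n / 7) J.card : ℝ)
    * earlyLate (n.choose 2) (s n) (t n) (12 - 2 * J.card) (incCard n (6 - J.card) - 12)
  have hμ : Tendsto μ atTop atTop := by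
    have h1 := tendsto_earlyLate_div_scale 6 3 60 hs ht
      (eventually_incCard_bounds 3 6 (by norm_num) (by norm_num))
    refine (h1.pos_mul_atTop one_pos (tendsto_first_moment_scale hH)).congr' ?_
    filter_upwards [hs.eventually_gt_atTop 0, eventually_gt_atTop 0] with n hs0 hn0
    have hs0' : (0 : ℝ) < s n := by exact_mod_cast hs0
    have hn0' : (0 : ℝ) < n := by exact_mod_cast hn0
    have hsc : scale n (s n) (t n) 6 3 ≠ 0 := by
      rw [scale]
      have he := Real.exp_pos (-(2 * (t n : ℝ) / n))
      positivity
    simp only [μ]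
    field_simp
  have hM : Tendsto (fun n => M n / μ n ^ 2) atTop (nhds 1) := by
    have h := tendsto_finsetSum (Finset.univ : Finset (Finset (Fin 3))) fun J _ =>
      tendsto_pair_ratio hs ht hH (k := J.card) (by simpa using Finset.card_le_univ J)
    simp only [Finset.card_eq_zero, Finset.sum_ite_eq', Finset.mem_univ, if_true] at h
    refine h.congr fun n => ?_
    simp only [M, μ, Finset.sum_div]
  -- Chebyshev's bound tends to zero
  have hcheb : Tendsto (fun n => (M n - μ n ^ 2) / (μ n - r) ^ 2) atTop (nhds 0) := by
    have h1 : Tendsto (fun n => 1 - (r : ℝ) * (μ n)⁻¹) atTop (nhds 1) := by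
      simpa using (hμ.inv_tendsto_atTop.const_mul (r : ℝ)).const_sub 1
    have h2 := (hM.sub_const 1).mul ((h1.inv₀ one_ne_zero).pow 2)
    simp only [sub_self, zero_mul] at h2
    refine h2.congr' ?_
    filter_upwards [hμ.eventually_gt_atTop (r : ℝ)] with n hn
    have hr0 : (0 : ℝ) ≤ r := Nat.cast_nonneg r
    have h3 : μ n ≠ 0 := by linarith
    have h4 : μ n - r ≠ 0 := by linarith
    have h5 : 1 - (r : ℝ) * (μ n)⁻¹ = (μ n - r) / μ n := by field_simp
    rw [h5]
    field_simp
  have hlow : Tendsto (fun n => 1 - (M n - μ n ^ 2) / (μ n - r) ^ 2) atTop (nhds 1) := by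
    simpa using hcheb.const_sub 1
  refine tendsto_of_tendsto_of_tendsto_of_le_of_le' hlow tendsto_const_nhds ?_
    (Eventually.of_forall fun n => pr_le_one _)
  have hN := eventually_lt_mul_sq (b := fun _ => 0) (k := 0) ht (by simp)
  filter_upwards [hst, hN, hμ.eventually_gt_atTop (r : ℝ)] with n hst hN hr
  have htN : t n ≤ n.choose 2 := by
    have h0 : (0 : ℝ) ≤ (n : ℝ) ^ 2 / 4 := by positivity
    have : (t n : ℝ) ≤ (n.choose 2 : ℝ) := by simp at hN; linarith
    exact_mod_cast this
  obtain ⟨e⟩ : Nonempty (Parts (n / 7) n) := by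
    refine Function.Embedding.nonempty_of_card_le ?_
    simp only [Fintype.card_sum, Fintype.card_prod, Fintype.card_fin]
    omega
  have hbound := pr_count_lt_le (fun T => e.Sp (s n) (t n) T) (e.sum_pr_Sp hst htN)
    (e.sum_pr_Sp_and_le hst htN) hr
  have hnot : pr n (fun σ => ¬ ∀ t', s n ≤ t' → t' ≤ t n →
      r ≤ spiderCount (processGraph n σ t'))
      ≤ pr n (fun σ => (Finset.univ.filter fun T => e.Sp (s n) (t n) T σ).card < r) := by
    refine pr_mono fun σ h => ?_
    push Not at h
    obtain ⟨t', h1, h2, h3⟩ := h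
    exact (e.count_le_spiderCount h1 h2 σ).trans_lt h3
  rw [pr_not] at hnot
  simp only [M, μ]
  linarith

end Window

/-! ### The three events that locate `t_i` -/

section Location

lemma tendsto_log_nat : Tendsto (fun n : ℕ => Real.log n) atTop atTop :=
  Real.tendsto_log_atTop.comp tendsto_natCast_atTop_atTop

lemma tendsto_loglog_nat : Tendsto (fun n : ℕ => Real.log (Real.log n)) atTop atTop :=
  Real.tendsto_log_atTop.comp tendsto_log_nat

lemma eventually_loglog_le {c : ℝ} (hc : 0 < c) :
    ∀ᶠ n : ℕ in atTop, Real.log (Real.log n) ≤ c * Real.log n := by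
  have h := (Real.isLittleO_log_id_atTop.comp_tendsto tendsto_log_nat).bound hc
  filter_upwards [h, tendsto_log_nat.eventually_ge_atTop 0] with n h h0
  simp only [Function.comp_apply, id_eq, Real.norm_eq_abs, abs_of_nonneg h0] at h
  exact (le_abs_self _).trans h

lemma tendsto_sq_div_cube {t : ℕ → ℕ} (h : ∀ᶠ n : ℕ in atTop, (t n : ℝ) ≤ n * Real.log n) :
    Tendsto (fun n => (t n : ℝ) ^ 2 / (n : ℝ) ^ 3) atTop (nhds 0) := by
  have h1 : Tendsto (fun n : ℕ => Real.log n ^ 2 / n) atTop (nhds 0) :=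
    ((Real.isLittleO_pow_log_id_atTop (n := 2)).tendsto_div_nhds_zero).comp
      tendsto_natCast_atTop_atTop
  refine tendsto_of_tendsto_of_tendsto_of_le_of_le' tendsto_const_nhds h1
    (Eventually.of_forall fun n => by positivity) ?_
  filter_upwards [h, eventually_gt_atTop 0] with n h hn
  have hn' : (0 : ℝ) < n := by exact_mod_cast hn
  calc (t n : ℝ) ^ 2 / (n : ℝ) ^ 3 ≤ (n * Real.log n) ^ 2 / (n : ℝ) ^ 3 := by gcongr
    _ = Real.log n ^ 2 / n := by field_simp

/-- `exp (-(2 t / n)) ^ 3 ≥ exp (-6 τ)` if `t ≤ τ n`. -/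
lemma exp_pow_ge {n t : ℕ} (hn : 0 < n) {τ : ℝ} (h : (t : ℝ) ≤ n * τ) :
    Real.exp (-(6 * τ)) ≤ Real.exp (-(2 * (t : ℝ) / n)) ^ 3 := by
  have hn' : (0 : ℝ) < n := by exact_mod_cast hn
  rw [← Real.exp_nat_mul]
  refine Real.exp_le_exp.2 ?_
  have : (t : ℝ) / n ≤ τ := by rw [div_le_iff₀ hn']; linarith
  push_cast
  rw [mul_div_assoc]
  linarith

/-- `exp (-(2 t / n)) ^ 3 ≤ exp (6 - 6 τ)` if `t ≥ τ n - 1`. -/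
lemma exp_pow_le {n t : ℕ} (hn : 0 < n) {τ : ℝ} (h : n * τ - 1 ≤ (t : ℝ)) :
    Real.exp (-(2 * (t : ℝ) / n)) ^ 3 ≤ Real.exp (6 - 6 * τ) := by
  have hn' : (1 : ℝ) ≤ n := by exact_mod_cast hn
  rw [← Real.exp_nat_mul]
  refine Real.exp_le_exp.2 ?_
  have : τ - 1 ≤ (t : ℝ) / n := by rw [le_div_iff₀ (by linarith)]; nlinarith
  push_cast
  rw [mul_div_assoc]
  linarith

variable {h : ℕ → ℝ}

/-- The predicted location of `t_i`, divided by `n`. -/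
noncomputable def loc (n : ℕ) : ℝ := 1 / 6 * Real.log n + Real.log (Real.log n)

lemma exp_loc {n : ℕ} (hn : 0 < Real.log n) (hn0 : 0 < n) :
    Real.exp (6 * loc n) = n * Real.log n ^ 6 := by
  have : 6 * loc n = Real.log n + (6 : ℕ) * Real.log (Real.log n) := by
    simp only [loc]; push_cast; ring
  rw [this, Real.exp_add, Real.exp_nat_mul, Real.exp_log hn, Real.exp_log (by exact_mod_cast hn0)]

/-- The last time of the first window. -/
noncomputable def tMid (h : ℕ → ℝ) (n : ℕ) : ℕ := ⌊(n : ℝ) * (loc n - h n) / 2⌋₊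

/-- The last time of the second window, slightly before the predicted location. -/
noncomputable def tLow (h : ℕ → ℝ) (n : ℕ) : ℕ := ⌊(n : ℝ) * (loc n - h n)⌋₊

/-- A time slightly after the predicted location. -/
noncomputable def tUp (h : ℕ → ℝ) (n : ℕ) : ℕ := ⌊(n : ℝ) * (loc n + h n)⌋₊

/-- The size estimates used for the three events. -/
lemma eventually_sizes (hh : Tendsto h atTop atTop) (hle : ∀ n, h n ≤ Real.log (Real.log n)) :
    ∀ᶠ n : ℕ in atTop, 0 < n ∧ 240 ≤ Real.log n ∧ 0 ≤ h n ∧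
      Real.log (Real.log n) ≤ 1 / 12 * Real.log n ∧
      (tMid h n : ℝ) ≤ n * ((loc n - h n) / 2) ∧ (n : ℝ) * (Real.log n / 24) ≤ tMid h n ∧
      (tLow h n : ℝ) ≤ n * (loc n - h n) ∧ (n : ℝ) * (loc n - h n) - 1 ≤ tLow h n ∧
      (tUp h n : ℝ) ≤ n * (loc n + h n) ∧ (n : ℝ) * (loc n + h n) - 1 ≤ tUp h n ∧
      1 / 6 * Real.log n ≤ loc n - h n ∧ loc n + h n ≤ Real.log n ∧ tMid h n ≤ tLow h n := by
  filter_upwards [eventually_gt_atTop 0, tendsto_log_nat.eventually_ge_atTop 240,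
    hh.eventually_ge_atTop 0, eventually_loglog_le (c := 1 / 12) (by norm_num)] with n h1 h2 h3 h4
  have hn : (1 : ℝ) ≤ n := by exact_mod_cast h1
  have h5 : 1 / 6 * Real.log n ≤ loc n - h n := by have := hle n; simp only [loc]; linarith
  have h6 : loc n + h n ≤ Real.log n := by have := hle n; simp only [loc]; linarith
  have h7 : 0 ≤ (n : ℝ) * (loc n - h n) := by
    have : 0 ≤ loc n - h n := by linarith
    positivity
  have h8 : 0 ≤ (n : ℝ) * (loc n + h n) := by
    have : 0 ≤ loc n + h n := by linarith
    positivity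
  have h9 : (n : ℝ) * (1 / 6 * Real.log n) ≤ n * (loc n - h n) := by gcongr
  have h10 : (240 : ℝ) ≤ n * Real.log n := by nlinarith
  refine ⟨h1, h2, h3, h4, ?_, ?_, Nat.floor_le h7, (Nat.sub_one_lt_floor _).le, Nat.floor_le h8,
    (Nat.sub_one_lt_floor _).le, h5, h6, Nat.floor_le_floor (by linarith)⟩
  · exact (Nat.floor_le (by linarith)).trans (by linarith)
  · refine le_trans ?_ (Nat.sub_one_lt_floor _).le
    linarith

variable (hh : Tendsto h atTop atTop) (hle : ∀ n, h n ≤ Real.log (Real.log n))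

include hh hle

lemma tendsto_tMid : Tendsto (tMid h) atTop atTop := by
  refine tendsto_atTop_mono' _ ?_ tendsto_id
  filter_upwards [eventually_sizes hh hle] with n hn
  obtain ⟨h1, h2, -, -, -, h6, -⟩ := hn
  have hn : (1 : ℝ) ≤ n := by exact_mod_cast h1
  have : (n : ℝ) ≤ tMid h n := by nlinarith
  exact_mod_cast this

/-- Spiders are present from time `10n` to time `tMid`. -/
lemma tendsto_first_window (r : ℕ) :
    Tendsto (fun n => pr n fun σ => ∀ t', 10 * n ≤ t' → t' ≤ tMid h n →
      r ≤ spiderCount (processGraph n σ t')) atTop (nhds 1) := by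
  refine tendsto_window (s := fun n => 10 * n) (t := tMid h)
    (tendsto_id.const_mul_atTop' (by norm_num)) ?_ (tendsto_sq_div_cube ?_) ?_ r
  · filter_upwards [eventually_sizes hh hle] with n hn
    obtain ⟨h1, h2, -, -, -, h6, -⟩ := hn
    have hn : (1 : ℝ) ≤ n := by exact_mod_cast h1
    have : (10 : ℝ) * n ≤ tMid h n := by nlinarith
    exact_mod_cast this
  · filter_upwards [eventually_sizes hh hle] with n hn
    obtain ⟨h1, h2, h3, h4, h5, -, -, -, -, -, -, h12, -⟩ := hn
    refine h5.trans ?_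
    gcongr
    linarith
  · have hexp : Tendsto (fun n : ℕ => Real.exp (1 / 4 * Real.log n)) atTop atTop :=
      Real.tendsto_exp_atTop.comp (tendsto_log_nat.const_mul_atTop (by norm_num))
    refine tendsto_atTop_mono' _ ?_ hexp
    filter_upwards [eventually_sizes hh hle] with n hn
    obtain ⟨h1, h2, h3, h4, h5, -, -, -, -, -, -, h12, -⟩ := hn
    have hn : (0 : ℝ) < n := by exact_mod_cast h1
    have he := exp_pow_ge h1 h5
    have h10 : (1 : ℝ) ≤ (((10 * n : ℕ) : ℝ) / n) ^ 6 := by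
      push_cast
      rw [mul_div_assoc, div_self hn.ne']
      norm_num
    calc Real.exp (1 / 4 * Real.log n)
        ≤ Real.exp (Real.log n + -(6 * ((loc n - h n) / 2))) := by
          refine Real.exp_le_exp.2 ?_
          simp only [loc]
          linarith
      _ = n * 1 * Real.exp (-(6 * ((loc n - h n) / 2))) := by
          rw [Real.exp_add, Real.exp_log hn, mul_one]
      _ ≤ _ := by gcongr

/-- Spiders are present from time `tMid` to time `tLow`. -/
lemma tendsto_second_window (r : ℕ) :
    Tendsto (fun n => pr n fun σ => ∀ t', tMid h n ≤ t' → t' ≤ tLow h n →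
      r ≤ spiderCount (processGraph n σ t')) atTop (nhds 1) := by
  refine tendsto_window (tendsto_tMid hh hle) ?_ (tendsto_sq_div_cube ?_) ?_ r
  · filter_upwards [eventually_sizes hh hle] with n hn
    exact hn.2.2.2.2.2.2.2.2.2.2.2.2
  · filter_upwards [eventually_sizes hh hle] with n hn
    obtain ⟨h1, h2, h3, h4, -, -, h7, -, -, -, -, h12, -⟩ := hn
    refine h7.trans ?_
    gcongr
    linarith
  · have hexp : Tendsto (fun n : ℕ => 1 / 24 ^ 6 * Real.exp (6 * h n)) atTop atTop :=
      (Real.tendsto_exp_atTop.comp (hh.const_mul_atTop (by norm_num))).const_mul_atTop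
        (by norm_num)
    refine tendsto_atTop_mono' _ ?_ hexp
    filter_upwards [eventually_sizes hh hle] with n hn
    obtain ⟨h1, h2, h3, h4, -, h6, h7, -⟩ := hn
    have hn : (0 : ℝ) < n := by exact_mod_cast h1
    have hl : 0 < Real.log n := by linarith
    have he := exp_pow_ge h1 h7
    have hs : Real.log n / 24 ≤ (tMid h n : ℝ) / n := by
      rw [le_div_iff₀ hn]; linarith
    calc 1 / 24 ^ 6 * Real.exp (6 * h n)
        = n * (Real.log n / 24) ^ 6 * Real.exp (-(6 * (loc n - h n))) := by
          have : -(6 * (loc n - h n)) = 6 * h n - 6 * loc n := by ring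
          rw [this, Real.exp_sub, exp_loc hl h1]
          field_simp
      _ ≤ _ := by gcongr

/-- At time `tUp` there are no spiders. -/
lemma tendsto_no_spider :
    Tendsto (fun n => pr n fun σ => 0 < spiderCount (processGraph n σ (tUp h n)))
      atTop (nhds 0) := by
  have hlog : ∀ᶠ n : ℕ in atTop, (tUp h n : ℝ) ≤ n * Real.log n := by
    filter_upwards [eventually_sizes hh hle] with n hn
    obtain ⟨h1, h2, h3, h4, -, -, -, -, h9, -, -, h12, -⟩ := hn
    refine h9.trans ?_
    gcongr
  have htt := tendsto_sq_div_cube hlog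
  have hup : Tendsto (tUp h) atTop atTop := by
    refine tendsto_atTop_mono' _ ?_ (tendsto_tMid hh hle)
    filter_upwards [eventually_sizes hh hle] with n hn
    obtain ⟨h1, h2, h3, -, -, -, -, -, -, -, -, -, h13⟩ := hn
    refine h13.trans (Nat.floor_le_floor ?_)
    gcongr
    linarith
  have h1 := tendsto_earlyLate_div_scale 6 3 60 hup htt
    (eventually_incCard_bounds 3 6 (by norm_num) (by norm_num))
  have hexp : Tendsto (fun n : ℕ => 64 * Real.exp 6 * Real.exp (-(6 * h n))) atTop (nhds 0) := by
    have := (Real.tendsto_exp_neg_atTop_nhds_zero.comp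
      (hh.const_mul_atTop (by norm_num : (0 : ℝ) < 6))).const_mul (64 * Real.exp 6)
    simpa using this
  have hsc : Tendsto (fun n : ℕ => (n : ℝ) ^ 7 * scale n (tUp h n) (tUp h n) 6 3) atTop
      (nhds 0) := by
    refine tendsto_of_tendsto_of_tendsto_of_le_of_le' tendsto_const_nhds hexp
      (Eventually.of_forall fun n => ?_) ?_
    · have he := Real.exp_pos (-(2 * (tUp h n : ℝ) / n))
      rw [scale]
      positivity
    · filter_upwards [eventually_sizes hh hle, hlog] with n hn hlog
      obtain ⟨h1, h2, h3, h4, -, -, -, -, -, h10, -⟩ := hn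
      have hn : (0 : ℝ) < n := by exact_mod_cast h1
      have hl : 0 < Real.log n := by linarith
      have he := exp_pow_le h1 h10
      calc (n : ℝ) ^ 7 * scale n (tUp h n) (tUp h n) 6 3
          ≤ (n : ℝ) ^ 7 * ((2 * (n * Real.log n) / (n : ℝ) ^ 2) ^ 6
              * Real.exp (6 - 6 * (loc n + h n))) := by
            rw [scale]
            gcongr
        _ = 64 * Real.exp 6 * Real.exp (-(6 * h n)) := by
            have : 6 - 6 * (loc n + h n) = 6 + -(6 * h n) - 6 * loc n := by ring
            rw [this, Real.exp_sub, Real.exp_add, exp_loc hl h1]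
            field_simp
            norm_num
  have h2 := hsc.mul h1
  rw [zero_mul] at h2
  have hN := eventually_lt_mul_sq (b := fun _ => 0) (k := 0) htt (by simp)
  refine tendsto_of_tendsto_of_tendsto_of_le_of_le' tendsto_const_nhds h2
    (Eventually.of_forall fun n => pr_nonneg _) ?_
  filter_upwards [hN, hup.eventually_gt_atTop 0, eventually_gt_atTop 0] with n hN hs0 hn0
  have htN : tUp h n ≤ n.choose 2 := by
    have h0 : (0 : ℝ) ≤ (n : ℝ) ^ 2 / 4 := by positivity
    have : (tUp h n : ℝ) ≤ (n.choose 2 : ℝ) := by simp at hN; linarith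
    exact_mod_cast this
  refine (pr_spiderCount_pos_le htN).trans (le_of_eq ?_)
  have hs0' : (0 : ℝ) < tUp h n := by exact_mod_cast hs0
  have hn0' : (0 : ℝ) < n := by exact_mod_cast hn0
  have hsc : scale n (tUp h n) (tUp h n) 6 3 ≠ 0 := by
    have he := Real.exp_pos (-(2 * (tUp h n : ℝ) / n))
    rw [scale]
    positivity
  field_simp

end Location

/-! ### Conclusion -/

/-- Deterministic consequence of the two persistence windows and the absence of spiders. -/
lemma abs_tSpider_sub_le {n i : ℕ} (hi : 0 < i) {h : ℕ → ℝ} {Gs : ℕ → SimpleGraph (Fin n)}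
    (hup : (tUp h n : ℝ) ≤ n * (loc n + h n)) (hlow : (n : ℝ) * (loc n - h n) - 1 ≤ tLow h n)
    (h10 : 10 * n < tUp h n)
    (w1 : ∀ t', 10 * n ≤ t' → t' ≤ tMid h n → i ≤ spiderCount (Gs t'))
    (w2 : ∀ t', tMid h n ≤ t' → t' ≤ tLow h n → i ≤ spiderCount (Gs t'))
    (h0 : ¬ 0 < spiderCount (Gs (tUp h n))) :
    |(tSpider n i Gs : ℝ) - n * loc n| ≤ h n * n := by
  have hmem : tUp h n ∈ {t | 10 * n < t ∧ spiderCount (Gs t) < i} := ⟨h10, by omega⟩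
  have h1 : tSpider n i Gs ≤ tUp h n := Nat.sInf_le hmem
  have h2 : 10 * n < tSpider n i Gs ∧ spiderCount (Gs (tSpider n i Gs)) < i :=
    Nat.sInf_mem ⟨_, hmem⟩
  have h3 : tLow h n < tSpider n i Gs := by
    by_contra! hc
    rcases le_total (tSpider n i Gs) (tMid h n) with h | h
    · exact absurd (w1 _ h2.1.le h) (by omega)
    · exact absurd (w2 _ h hc) (by omega)
  have h1' : (tSpider n i Gs : ℝ) ≤ tUp h n := by exact_mod_cast h1
  have h3' : (tLow h n : ℝ) + 1 ≤ tSpider n i Gs := by exact_mod_cast h3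
  rw [abs_le]
  constructor <;> linarith

/-- location of `t_i` in the random graph process. -/
theorem statement_2 (i : ℕ) (hi : 0 < i) (g : ℕ → ℝ)
    (hg : Filter.Tendsto g Filter.atTop Filter.atTop) :
    Filter.Tendsto (fun n : ℕ =>
      processProb n (fun Gs =>
        |(tSpider n i Gs : ℝ) - (n : ℝ) * (1 / 6 * Real.log n + Real.log (Real.log n))| ≤
          g n * n))
      Filter.atTop (nhds 1) := by
  -- shrinking `g` only strengthens the claim, so it may be assumed to be at most `log log n`
  let h : ℕ → ℝ := fun n => min (g n) (Real.log (Real.log n))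
  have hh : Tendsto h atTop atTop := tendsto_atTop.2 fun B => by
    filter_upwards [hg.eventually_ge_atTop B, tendsto_loglog_nat.eventually_ge_atTop B]
      with n h1 h2 using le_min h1 h2
  have hle : ∀ n, h n ≤ Real.log (Real.log n) := fun n => min_le_right _ _
  have hlow := ((tendsto_first_window hh hle i).add (tendsto_second_window hh hle i)).sub
    ((tendsto_no_spider hh hle).add_const 1)
  norm_num at hlow
  refine tendsto_of_tendsto_of_tendsto_of_le_of_le' hlow tendsto_const_nhds ?_
    (Eventually.of_forall fun n => by rw [processProb_eq_pr]; exact pr_le_one _)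
  filter_upwards [eventually_sizes hh hle] with n hn
  obtain ⟨h1, h2, h3, -, -, -, -, h8, h9, h10, h11, -⟩ := hn
  have hn : (1 : ℝ) ≤ n := by exact_mod_cast h1
  have h10n : 10 * n < tUp h n := by
    have : (10 : ℝ) * n < tUp h n := by
      have : (n : ℝ) * (1 / 6 * Real.log n) ≤ n * (loc n + h n) := by
        gcongr
        linarith
      nlinarith
    exact_mod_cast this
  rw [processProb_eq_pr]
  set W₁ : Ordering n → Prop := fun σ => ∀ t', 10 * n ≤ t' → t' ≤ tMid h n →
    i ≤ spiderCount (processGraph n σ t')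
  set W₂ : Ordering n → Prop := fun σ => ∀ t', tMid h n ≤ t' → t' ≤ tLow h n →
    i ≤ spiderCount (processGraph n σ t')
  set Z : Ordering n → Prop := fun σ => 0 < spiderCount (processGraph n σ (tUp h n))
  set Q : Ordering n → Prop := fun σ =>
    |(tSpider n i (processGraph n σ) : ℝ)
      - (n : ℝ) * (1 / 6 * Real.log n + Real.log (Real.log n))| ≤ g n * n
  have hsub : pr n (fun σ => ¬ Q σ) ≤ pr n (fun σ => ¬ W₁ σ ∨ (¬ W₂ σ ∨ Z σ)) := by
    refine pr_mono fun σ hQ => ?_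
    by_contra! hc
    obtain ⟨hw1, hw2, hz⟩ := hc
    refine hQ ((abs_tSpider_sub_le hi h9 h8 h10n hw1 hw2 hz).trans ?_)
    exact mul_le_mul_of_nonneg_right (min_le_left _ _) (by linarith)
  have hun := (pr_or_le (fun σ => ¬ W₁ σ) (fun σ => ¬ W₂ σ ∨ Z σ)).trans
    (add_le_add_right (pr_or_le (fun σ => ¬ W₂ σ) Z) _)
  rw [pr_not] at hsub
  rw [pr_not, pr_not] at hun
  linarith

end PaperMu
end

section
/- Let {G_t}_{t=0}^{C(n,2)} be a random graph process on {1,…,n} and let g : ℕ → ℝ be any function with g(n) → ∞. Then with high probability, for every t with 0 ≤ t ≤ g(n)^{−1}·n^{2/3}, μ(G_t) = n_0(G_t) + ⌈n_1(G_t)/2⌉. -/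
/-!
Up to time `T = ⌊n ^ (2/3) / g n⌋` the process is, with high probability, a linear forest, and for
linear forests the formula for `μ` holds exactly.

In any graph, a vertex of degree `d < 2` needs at least `2 - d` new edges to lie on a Hamiltonian
cycle, so `2 μ ≥ 2 n₀ + n₁` (`le_card_of_isHamiltonian`). If `G` is a linear forest on `n ≥ 3`
vertices, a maximal linear forest containing it is connected, hence a Hamiltonian path, and joining
its two ends gives a Hamiltonian cycle containing `G`. That cycle has `n - |E(G)| = n₀ + n₁ / 2`
new edges, since `∑ v, (2 - deg v) = 2 n₀ + n₁` (`mu_eq`).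

A graph is a linear forest when it has no cycle and no three edges at a common vertex. Being a
linear forest passes to subgraphs, so only time `T` matters. A set of `k` potential edges is among
the first `T` in a uniform ordering with probability at most `(T / (n.choose 2)) ^ k`
(`card_early_le`, by exchanging edges and double counting). A claw is given by `4` vertices and `3`
edges, and a cycle of length `k ≥ 3`, written as a closed walk, by `k + 1` vertices and `k` edges.
With `y = 4 n ^ (2/3) / (g n * n)`, the union bound for `k` edges is `n * y ^ k`; summing the
geometric series gives a failure probability of at most `3 n y ^ 3 = 192 / (g n) ^ 3`, which tends
to `0`.
-/

open Filter
open scoped Classical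

namespace PaperMu

/-! ### The value of `μ` on linear forests -/

/-- No vertex has three distinct neighbours; equivalently all degrees are at most two. -/
def ClawFree {n : ℕ} (G : SimpleGraph (Fin n)) : Prop :=
  ∀ v a b c, G.Adj v a → G.Adj v b → G.Adj v c → a = b ∨ a = c ∨ b = c

/-- `v` has at most one neighbour. -/
def AtMostOneNbr {n : ℕ} (G : SimpleGraph (Fin n)) (v : Fin n) : Prop :=
  ∀ a b, G.Adj v a → G.Adj v b → a = b

lemma ClawFree.anti {n : ℕ} {G H : SimpleGraph (Fin n)} (h : G ≤ H) (hH : ClawFree H) :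
    ClawFree G := fun v a b c ha hb hc => hH v a b c (h ha) (h hb) (h hc)

lemma ClawFree.degree_le {n : ℕ} {G : SimpleGraph (Fin n)} (h : ClawFree G) (v : Fin n) :
    G.degree v ≤ 2 := by
  by_contra! hc
  obtain ⟨a, b, c, ha, hb, hc, hab, hac, hbc⟩ := Finset.two_lt_card_iff.mp hc
  simp only [SimpleGraph.mem_neighborFinset] at ha hb hc
  rcases h v a b c ha hb hc with h | h | h <;> contradiction

/-- The end of a longest path out of `u` has at most one neighbour. -/
lemma exists_reachable_atMostOneNbr {n : ℕ} {G : SimpleGraph (Fin n)} (hG : G.IsAcyclic)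
    (u : Fin n) : ∃ w, G.Reachable u w ∧ AtMostOneNbr G w := by
  let S : Set ℕ := {k | ∃ w, ∃ p : G.Walk u w, p.IsPath ∧ p.length = k}
  have hne : S.Nonempty := ⟨0, u, .nil, by simp, rfl⟩
  have hbd : BddAbove S := ⟨n, by
    rintro k ⟨w, p, hp, rfl⟩
    simpa using hp.length_lt.le⟩
  obtain ⟨w, p, hp, hl⟩ := Nat.sSup_mem hne hbd
  have key : ∀ a, G.Adj w a → a = p.penultimate := by
    intro a ha
    by_cases hmem : a ∈ p.support
    · exact hG.eq_penultimate_of_adj_end hp ha hmem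
    · exfalso
      have : (p.concat ha).IsPath := hp.concat hmem ha
      have h1 : p.length + 1 ∈ S := ⟨a, p.concat ha, this, by simp⟩
      have := le_csSup hbd h1
      omega
  exact ⟨w, p.reachable, fun a b ha hb => (key a ha).trans (key b hb).symm⟩

/-- Joining two components of a linear forest at vertices with at most one neighbour. -/
lemma ClawFree.sup_edge {n : ℕ} {G : SimpleGraph (Fin n)} (h : ClawFree G) {x y : Fin n}
    (hx : AtMostOneNbr G x) (hy : AtMostOneNbr G y) :
    ClawFree (G ⊔ SimpleGraph.edge x y) := by
  intro v a b c ha hb hc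
  simp only [SimpleGraph.sup_adj, SimpleGraph.edge_adj] at ha hb hc
  have := h v a b c
  have := hx a b
  have := hx a c
  have := hx b c
  have := hy a b
  have := hy a c
  have := hy b c
  grind

/-- Every linear forest extends to a spanning tree with all degrees at most two, that is, to a
Hamiltonian path: a maximal linear forest is connected. -/
lemma exists_maximal_tree {n : ℕ} (hn : 0 < n) {G : SimpleGraph (Fin n)} (hG : G.IsAcyclic)
    (hc : ClawFree G) : ∃ P, G ≤ P ∧ P.IsTree ∧ ClawFree P := by
  obtain ⟨P, hGP, hP⟩ := Finite.exists_le_maximal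
    (p := fun P : SimpleGraph (Fin n) => P.IsAcyclic ∧ ClawFree P) ⟨hG, hc⟩
  have : Nonempty (Fin n) := ⟨⟨0, hn⟩⟩
  refine ⟨P, hGP, ⟨⟨fun u v => ?_⟩, hP.prop.1⟩, hP.prop.2⟩
  by_contra huv
  obtain ⟨x, hux, hx⟩ := exists_reachable_atMostOneNbr hP.prop.1 u
  obtain ⟨y, hvy, hy⟩ := exists_reachable_atMostOneNbr hP.prop.1 v
  have hxy : ¬ P.Reachable x y := fun h => huv ((hux.trans h).trans hvy.symm)
  have hle : P ⊔ SimpleGraph.edge x y ≤ P :=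
    hP.le_of_ge ⟨hP.prop.1.sup_edge_of_not_reachable hxy, hP.prop.2.sup_edge hx hy⟩ le_sup_left
  have hne : x ≠ y := by rintro rfl; exact hxy .rfl
  have : P.Adj x y := hle (by simp [SimpleGraph.edge_adj, hne])
  exact hxy this.reachable

/-- A path between two leaves of a graph of maximum degree two is closed under adjacency, so it
fills a whole component. -/
lemma mem_support_of_adj {n : ℕ} {P : SimpleGraph (Fin n)} (hc : ClawFree P) {a b : Fin n}
    (hab : a ≠ b) (ha : AtMostOneNbr P a) (hb : AtMostOneNbr P b) (p : P.Walk a b)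
    (hp : p.IsPath) {x y : Fin n} (hx : x ∈ p.support) (hxy : P.Adj x y) : y ∈ p.support := by
  obtain ⟨i, rfl, hi⟩ := SimpleGraph.Walk.mem_support_iff_exists_getVert.mp hx
  have hpos : 0 < p.length := by
    rcases Nat.eq_zero_or_pos p.length with h | h
    · exact absurd (SimpleGraph.Walk.eq_of_length_eq_zero h) hab
    · exact h
  have succ : ∀ j, j < p.length → P.Adj (p.getVert j) (p.getVert (j + 1)) :=
    fun j hj => p.adj_getVert_succ hj
  rcases Nat.eq_zero_or_pos i with rfl | hi0
  · have h1 := succ 0 hpos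
    simp only [SimpleGraph.Walk.getVert_zero] at h1 hxy
    rw [ha _ _ hxy h1]
    exact p.getVert_mem_support _
  · have h0 : P.Adj (p.getVert i) (p.getVert (i - 1)) := by
      have := succ (i - 1) (by omega)
      rw [Nat.sub_add_cancel hi0] at this
      exact this.symm
    rcases hi.lt_or_eq with hlt | rfl
    · have h1 := succ i hlt
      rcases hc _ _ _ _ hxy h0 h1 with h | h | h
      · rw [h]; exact p.getVert_mem_support _
      · rw [h]; exact p.getVert_mem_support _
      · have := hp.getVert_injOn (by simp; omega) (by simp; omega) h
        omega
    · rw [SimpleGraph.Walk.getVert_length] at hxy h0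
      rw [hb _ _ hxy h0]
      exact p.getVert_mem_support _

/-- Joining the two leaves of a spanning path closes it up to a Hamiltonian cycle. -/
lemma isHamiltonian_sup_edge {n : ℕ} (hn : 3 ≤ n) {P : SimpleGraph (Fin n)} (hT : P.IsTree)
    (hc : ClawFree P) : ∃ a b, (P ⊔ SimpleGraph.edge a b).IsHamiltonian := by
  have : Nontrivial (Fin n) := Fin.nontrivial_iff_two_le.mpr (by omega)
  obtain ⟨a, b, hab, hda, hdb⟩ := hT.exists_ne_and_degree_eq_one
  have one : ∀ v, P.degree v = 1 → AtMostOneNbr P v := fun v hv x y hx hy =>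
    (SimpleGraph.degree_eq_one_iff_existsUnique_adj.mp hv).unique hx hy
  obtain ⟨p, hp, -⟩ := hT.existsUnique_path a b
  have hall : ∀ w, w ∈ p.support := by
    intro w
    obtain ⟨q⟩ := hT.connected a w
    have : ∀ {x y : Fin n} (q : P.Walk x y), x ∈ p.support → y ∈ p.support := by
      intro x y q
      induction q with
      | nil => exact id
      | cons h _ ih => exact fun hx => ih (mem_support_of_adj hc hab (one a hda) (one b hdb) p hp hx h)
    exact this q p.start_mem_support
  have hham : p.IsHamiltonian := hp.isHamiltonian_of_mem hall
  have hlen := hham.length_eq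
  rw [Fintype.card_fin] at hlen
  refine ⟨a, b, fun _ => ?_⟩
  have hle : P ≤ P ⊔ SimpleGraph.edge a b := le_sup_left
  have hba : (P ⊔ SimpleGraph.edge a b).Adj b a := by
    simp [SimpleGraph.edge_adj, hab.symm]
  refine ⟨b, .cons hba (p.mapLe hle), ?_⟩
  rw [SimpleGraph.Walk.isHamiltonianCycle_iff_isCycle_and_length_eq]
  constructor
  · rw [SimpleGraph.Walk.cons_isCycle_iff]
    refine ⟨hp.mapLe hle, fun hmem => ?_⟩
    simp only [SimpleGraph.Walk.edges_mapLe_eq_edges] at hmem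
    have hadj : P.Adj a b := (p.adj_of_mem_edges hmem).symm
    have : hadj.toWalk = p := by
      have := (hT.isAcyclic.subsingleton_path a b).elim
        ⟨hadj.toWalk, by simp [hab]⟩ ⟨p, hp⟩
      exact congrArg Subtype.val this
    -- the Hamiltonian path would have length one, against `3 ≤ n`
    rw [← this] at hlen
    simp at hlen
    omega
  · simp [hlen]
    omega

/-- In a Hamiltonian graph on at least three vertices all degrees are at least two. -/
lemma two_le_degree {n : ℕ} (hn : 3 ≤ n) {H : SimpleGraph (Fin n)} (hH : H.IsHamiltonian)
    (v : Fin n) : 2 ≤ H.degree v := by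
  have : Nontrivial (Fin n) := Fin.nontrivial_iff_two_le.mpr (by omega)
  obtain ⟨p, hp⟩ := hH.exists_isHamiltonianCycle v
  have hnn := hp.isCycle.not_nil
  have h1 : p.snd ∈ H.neighborFinset v := by simpa using p.adj_snd hnn
  have h2 : p.penultimate ∈ H.neighborFinset v := by simpa using (p.adj_penultimate hnn).symm
  exact Finset.one_lt_card.mpr ⟨_, h1, _, h2, hp.isCycle.snd_ne_penultimate⟩

lemma sum_two_sub_degree {n : ℕ} (G : SimpleGraph (Fin n)) :
    ∑ v, (2 - G.degree v) = 2 * degCount G 0 + degCount G 1 := by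
  have : ∀ v, 2 - G.degree v =
      2 * (if G.degree v = 0 then 1 else 0) + (if G.degree v = 1 then 1 else 0) := by
    intro v; split_ifs <;> omega
  simp only [this, Finset.sum_add_distrib, ← Finset.mul_sum, degCount, Finset.card_filter]

/-- Each vertex of degree `d < 2` needs at least `2 - d` new edges. -/
lemma le_card_of_isHamiltonian {n : ℕ} (hn : 3 ≤ n) (G : SimpleGraph (Fin n))
    (F : Finset (Sym2 (Fin n)))
    (h : (G ⊔ SimpleGraph.fromEdgeSet (F : Set (Sym2 (Fin n)))).IsHamiltonian) :
    2 * degCount G 0 + degCount G 1 ≤ 2 * F.card := by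
  set K := SimpleGraph.fromEdgeSet (F : Set (Sym2 (Fin n))) with hK
  have hdeg : ∀ v, 2 - G.degree v ≤ K.degree v := by
    intro v
    have h2 : 2 ≤ (G ⊔ K).degree v := by convert! two_le_degree hn h v
    have : (G ⊔ K).degree v ≤ G.degree v + K.degree v := by
      simp only [← SimpleGraph.card_neighborFinset_eq_degree]
      refine le_trans (Finset.card_le_card ?_) (Finset.card_union_le _ _)
      intro x; simp
    omega
  have hsum := Finset.sum_le_sum (fun v (_ : v ∈ Finset.univ) => hdeg v)
  have hK2 := K.sum_degrees_eq_twice_card_edges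
  rw [sum_two_sub_degree] at hsum
  have : K.edgeFinset.card ≤ F.card := by
    apply Finset.card_le_card
    intro e he
    simp [hK] at he
    exact he.1
  refine hsum.trans ?_
  rw [hK2]
  exact Nat.mul_le_mul_left 2 (by convert! this)

/-- For a linear forest `G` the degree lower bound is attained: a Hamiltonian cycle through all of
`G` uses `n - |E(G)|` new edges, and `2 |E(G)| = 2 n - 2 n₀ - n₁` because degrees are at most
two. -/
lemma mu_eq {n : ℕ} (hn : 3 ≤ n) {G : SimpleGraph (Fin n)} (hG : G.IsAcyclic)
    (hc : ClawFree G) : mu G = degCount G 0 + (degCount G 1 + 1) / 2 := by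
  obtain ⟨P, hGP, hT, hcP⟩ := exists_maximal_tree (by omega) hG hc
  obtain ⟨a, b, hH⟩ := isHamiltonian_sup_edge hn hT hcP
  set H := P ⊔ SimpleGraph.edge a b with hHdef
  have hGH : G ≤ H := hGP.trans le_sup_left
  set F := H.edgeFinset \ G.edgeFinset with hF
  have hcardH : H.edgeFinset.card ≤ n := by
    have h1 := hT.card_edgeFinset
    have : H.edgeFinset ⊆ insert s(a, b) P.edgeFinset := by
      intro e
      induction e with | _ x y
      simp [hHdef]
      tauto
    have h2 := Finset.card_le_card this
    have h3 := Finset.card_insert_le s(a, b) P.edgeFinset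
    simp only [Fintype.card_fin] at h1
    omega
  have hcardF : F.card + G.edgeFinset.card ≤ n := by
    rw [hF, Finset.card_sdiff_add_card_eq_card (SimpleGraph.edgeFinset_mono hGH)]
    exact hcardH
  have hdeg := sum_two_sub_degree G
  have hsum := G.sum_degrees_eq_twice_card_edges
  have htot : ∑ v, (2 - G.degree v) + ∑ v, G.degree v = 2 * n := by
    rw [← Finset.sum_add_distrib, Finset.sum_congr rfl
      (fun v _ => Nat.sub_add_cancel (hc.degree_le v))]
    simp [mul_comm]
  have hFmem : F.card ∈ { m | ∃ F : Finset (Sym2 (Fin n)),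
      F.card = m ∧ (∀ e ∈ F, ¬ e.IsDiag ∧ e ∉ G.edgeSet) ∧
      (G ⊔ SimpleGraph.fromEdgeSet (F : Set (Sym2 (Fin n)))).IsHamiltonian } := by
    refine ⟨F, rfl, fun e he => ?_, hH.mono ?_⟩
    · simp only [hF, Finset.mem_sdiff, SimpleGraph.mem_edgeFinset] at he
      exact ⟨H.not_isDiag_of_mem_edgeSet he.1, he.2⟩
    · intro x y hxy
      by_cases hg : G.Adj x y <;> simp [hF, hg, hxy]
  apply le_antisymm
  · refine (Nat.sInf_le hFmem).trans ?_
    omega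
  · refine le_csInf ⟨_, hFmem⟩ ?_
    rintro m ⟨F', rfl, -, hF'⟩
    have := le_card_of_isHamiltonian hn G F' hF'
    omega

/-! ### Early appearance of a fixed set of edges -/

/-- The potential edges of a graph on `Fin n`. -/
abbrev Pot (n : ℕ) := {e : Sym2 (Fin n) // ¬ e.IsDiag}

/-- The orderings of the potential edges in which all of `S` comes among the first `T`. -/
noncomputable def early {n : ℕ} (T : ℕ) (S : Finset (Pot n)) :
    Finset (Fin (n.choose 2) ≃ Pot n) :=
  Finset.univ.filter fun σ => ∀ e ∈ S, (σ.symm e : ℕ) < T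

lemma mem_early {n T : ℕ} {S : Finset (Pot n)} {σ : Fin (n.choose 2) ≃ Pot n} :
    σ ∈ early T S ↔ ∀ e ∈ S, (σ.symm e : ℕ) < T := by simp [early]

lemma card_pot (n : ℕ) : Fintype.card (Pot n) = n.choose 2 := by
  have := Sym2.card_subtype_not_diag (α := Fin n)
  simpa using this

/-- By symmetry, exchanging `e` for another potential edge cannot lower the count. -/
lemma card_early_insert_le {n : ℕ} (T : ℕ) {S : Finset (Pot n)} {e : Pot n} (he : e ∉ S)
    (e' : Pot n) : (early T (insert e S)).card ≤ (early T (insert e' S)).card := by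
  by_cases he' : e' ∈ S
  · apply Finset.card_le_card
    intro σ
    simp only [mem_early, Finset.mem_insert]
    intro h x hx
    rcases hx with rfl | hx
    · exact h _ (Or.inr he')
    · exact h _ (Or.inr hx)
  · refine Finset.card_le_card_of_injOn (fun σ => σ.trans (Equiv.swap e e')) ?_ ?_
    · intro σ hσ
      simp only [Finset.mem_coe, mem_early, Finset.mem_insert] at hσ ⊢
      intro x hx
      simp only [Equiv.symm_trans_apply, Equiv.symm_swap]
      rcases hx with rfl | hx
      · rw [Equiv.swap_apply_right]; exact hσ _ (Or.inl rfl)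
      · rw [Equiv.swap_apply_of_ne_of_ne (by rintro rfl; exact he hx)
          (by rintro rfl; exact he' hx)]
        exact hσ _ (Or.inr hx)
    · intro σ _ τ _ h
      refine Equiv.ext fun x => ?_
      have := congrArg (fun f : Fin (n.choose 2) ≃ Pot n => f x) h
      exact (Equiv.swap e e').injective this

/-- Double counting: each ordering has at most `T` potential edges in its first `T` places. -/
lemma mul_card_early_insert {n : ℕ} (T : ℕ) {S : Finset (Pot n)} {e : Pot n} (he : e ∉ S) :
    n.choose 2 * (early T (insert e S)).card ≤ T * (early T S).card := by
  calc n.choose 2 * (early T (insert e S)).card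
      = ∑ _e' : Pot n, (early T (insert e S)).card := by
        rw [Finset.sum_const, Finset.card_univ, card_pot, smul_eq_mul]
    _ ≤ ∑ e' : Pot n, (early T (insert e' S)).card :=
        Finset.sum_le_sum fun e' _ => card_early_insert_le T he e'
    _ = ∑ e' : Pot n, ((early T S).filter fun σ => (σ.symm e' : ℕ) < T).card := by
        refine Finset.sum_congr rfl fun e' _ => congrArg _ ?_
        ext σ
        simp only [Finset.mem_filter, mem_early, Finset.forall_mem_insert]
        tauto
    _ = ∑ σ ∈ early T S, (Finset.univ.filter fun e' : Pot n => (σ.symm e' : ℕ) < T).card := by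
        simp only [Finset.card_filter]
        rw [Finset.sum_comm]
    _ ≤ ∑ _σ ∈ early T S, T := by
        refine Finset.sum_le_sum fun σ _ => ?_
        refine (Finset.card_le_card_of_injOn (t := Finset.range T)
          (fun e' => (σ.symm e' : ℕ)) ?_ ?_).trans (Finset.card_range T).le
        · intro e' he'
          simpa using he'
        · intro x _ y _ h
          exact σ.symm.injective (Fin.ext h)
    _ = T * (early T S).card := by rw [Finset.sum_const, smul_eq_mul, mul_comm]

/-- A fixed set of `k` potential edges appears by time `T` with probability at most
`(T / (n.choose 2)) ^ k`. -/
lemma card_early_le {n : ℕ} (T : ℕ) (S : Finset (Pot n)) :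
    n.choose 2 ^ S.card * (early T S).card ≤
      T ^ S.card * Fintype.card (Fin (n.choose 2) ≃ Pot n) := by
  induction S using Finset.induction_on with
  | empty => simpa using Finset.card_le_univ _
  | insert e S he ih =>
    rw [Finset.card_insert_of_notMem he, pow_succ, pow_succ]
    calc n.choose 2 ^ S.card * n.choose 2 * (early T (insert e S)).card
        = n.choose 2 ^ S.card * (n.choose 2 * (early T (insert e S)).card) := by ring
      _ ≤ n.choose 2 ^ S.card * (T * (early T S).card) :=
          Nat.mul_le_mul_left _ (mul_card_early_insert T he)
      _ = T * (n.choose 2 ^ S.card * (early T S).card) := by ring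
      _ ≤ T * (T ^ S.card * Fintype.card (Fin (n.choose 2) ≃ Pot n)) :=
          Nat.mul_le_mul_left _ ih
      _ = _ := by ring

/-! ### Union bounds over claws and cycles -/

/-- The potential edges occurring in a list of unordered pairs. -/
noncomputable def potOf {n : ℕ} (l : List (Sym2 (Fin n))) : Finset (Pot n) :=
  Finset.univ.filter fun e => (e : Sym2 (Fin n)) ∈ l

lemma potOf_spec {n T : ℕ} {σ : Fin (n.choose 2) ≃ Pot n} {l : List (Sym2 (Fin n))}
    (hl : l.Nodup) (h : ∀ e ∈ l, e ∈ (processGraph n σ T).edgeSet) :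
    (potOf l).card = l.length ∧ σ ∈ early T (potOf l) := by
  constructor
  · rw [← List.toFinset_card_of_nodup hl, ← Finset.card_map (Function.Embedding.subtype _)]
    congr 1
    ext e
    simp only [potOf, Finset.mem_map, Finset.mem_filter, Finset.mem_univ, true_and,
      Function.Embedding.subtype_apply, List.mem_toFinset]
    constructor
    · rintro ⟨a, ha, rfl⟩; exact ha
    · intro he
      exact ⟨⟨e, SimpleGraph.not_isDiag_of_mem_edgeSet _ (h e he)⟩, he, rfl⟩
  · rw [mem_early]
    intro e he
    have he' : (e : Sym2 (Fin n)) ∈ l := by simpa [potOf] using he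
    have := h _ he'
    simp only [processGraph, SimpleGraph.edgeSet_fromEdgeSet] at this
    obtain ⟨k, hk, hke⟩ := this.1
    have : σ.symm e = k := by rw [Equiv.symm_apply_eq]; exact Subtype.ext hke.symm
    rw [this]; exact hk

/-- The orderings placing, for some index `v`, a set `S v` of exactly `k` potential edges among
the first `T`. -/
noncomputable def hit {n : ℕ} (T k : ℕ) {ι : Type*} [Fintype ι] (S : ι → Finset (Pot n)) :
    Finset (Fin (n.choose 2) ≃ Pot n) :=
  (Finset.univ.filter fun v => (S v).card = k).biUnion fun v => early T (S v)

lemma card_hit_le {n : ℕ} (T k : ℕ) {ι : Type*} [Fintype ι] (S : ι → Finset (Pot n)) :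
    n.choose 2 ^ k * (hit T k S).card ≤
      Fintype.card ι * (T ^ k * Fintype.card (Fin (n.choose 2) ≃ Pot n)) := by
  calc n.choose 2 ^ k * (hit T k S).card
      ≤ n.choose 2 ^ k * ∑ v ∈ Finset.univ.filter (fun v => (S v).card = k),
          (early T (S v)).card := Nat.mul_le_mul_left _ Finset.card_biUnion_le
    _ = ∑ v ∈ Finset.univ.filter (fun v => (S v).card = k),
          n.choose 2 ^ k * (early T (S v)).card := Finset.mul_sum _ _ _
    _ ≤ ∑ v ∈ Finset.univ.filter (fun v => (S v).card = k),
          T ^ k * Fintype.card (Fin (n.choose 2) ≃ Pot n) := by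
        refine Finset.sum_le_sum fun v hv => ?_
        have hk : (S v).card = k := by simpa using hv
        simpa only [hk] using card_early_le T (S v)
    _ ≤ _ := by
        rw [Finset.sum_const, smul_eq_mul]
        exact Nat.mul_le_mul_right _ (Finset.card_le_univ _)

/-- The pairs of a claw with centre `v 0` and leaves `v 1, v 2, v 3`. -/
def clawList {n : ℕ} (v : Fin 4 → Fin n) : List (Sym2 (Fin n)) :=
  [s(v 0, v 1), s(v 0, v 2), s(v 0, v 3)]

/-- The pairs of consecutive entries of a vertex sequence. -/
def walkList {n k : ℕ} (v : List.Vector (Fin n) k) : List (Sym2 (Fin n)) :=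
  List.zipWith (s(·, ·)) v.toList v.toList.tail

/-- The orderings for which a claw is present at time `T`. -/
noncomputable def clawBad (n T : ℕ) : Finset (Fin (n.choose 2) ≃ Pot n) :=
  hit T 3 fun v : Fin 4 → Fin n => potOf (clawList v)

/-- The orderings for which a sequence of `k + 1` vertices with `k` distinct consecutive pairs is
a walk at time `T`; this covers the presence of a cycle of length `k`. -/
noncomputable def cycBad (n T k : ℕ) : Finset (Fin (n.choose 2) ≃ Pot n) :=
  hit T k fun v : List.Vector (Fin n) (k + 1) => potOf (walkList v)

lemma clawFree_of_notMem {n T : ℕ} {σ : Fin (n.choose 2) ≃ Pot n} (h : σ ∉ clawBad n T) :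
    ClawFree (processGraph n σ T) := by
  by_contra hc
  apply h
  simp only [ClawFree, not_forall, not_or] at hc
  obtain ⟨v, a, b, c, ha, hb, hc, hab, hac, hbc⟩ := hc
  have := potOf_spec (σ := σ) (T := T) (l := clawList ![v, a, b, c])
    (by simp [clawList]; grind) (by
      intro e he
      simp only [clawList, List.mem_cons, List.not_mem_nil, or_false] at he
      rcases he with rfl | rfl | rfl <;> simpa)
  simp only [clawBad, hit, Finset.mem_biUnion, Finset.mem_filter, Finset.mem_univ, true_and]
  exact ⟨![v, a, b, c], this.1, this.2⟩

lemma isAcyclic_of_notMem {n T : ℕ} {σ : Fin (n.choose 2) ≃ Pot n}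
    (h : ∀ k ∈ Finset.Icc 3 n, σ ∉ cycBad n T k) : (processGraph n σ T).IsAcyclic := by
  intro u w hw
  have hlen : w.length ≤ n := by
    have := hw.support_nodup.length_le_card
    simpa using this
  apply h w.length (Finset.mem_Icc.mpr ⟨hw.three_le_length, hlen⟩)
  let v : List.Vector (Fin n) (w.length + 1) := ⟨w.support, w.length_support⟩
  have hv : walkList v = w.edges := SimpleGraph.Walk.edges_eq_zipWith_support.symm
  have := potOf_spec (σ := σ) (T := T) (l := w.edges) hw.edges_nodup
    (fun e he => w.edges_subset_edgeSet he)
  rw [SimpleGraph.Walk.length_edges] at this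
  simp only [cycBad, hit, Finset.mem_biUnion, Finset.mem_filter, Finset.mem_univ, true_and]
  exact ⟨v, by rw [hv]; exact this.1, by rw [hv]; exact this.2⟩

/-- The orderings for which the graph at time `T` is not a linear forest. -/
noncomputable def bad (n T : ℕ) : Finset (Fin (n.choose 2) ≃ Pot n) :=
  clawBad n T ∪ (Finset.Icc 3 n).biUnion (cycBad n T)

lemma mu_processGraph {n T : ℕ} (hn : 3 ≤ n) {σ : Fin (n.choose 2) ≃ Pot n} (h : σ ∉ bad n T)
    {t : ℕ} (ht : t ≤ T) : mu (processGraph n σ t) =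
      degCount (processGraph n σ t) 0 + (degCount (processGraph n σ t) 1 + 1) / 2 := by
  simp only [bad, Finset.mem_union, Finset.mem_biUnion, not_or, not_exists, not_and] at h
  have hle : processGraph n σ t ≤ processGraph n σ T := by
    apply SimpleGraph.fromEdgeSet_mono
    rintro e ⟨k, hk, he⟩
    exact ⟨k, hk.trans_le ht, he⟩
  exact mu_eq hn ((isAcyclic_of_notMem h.2).anti hle) ((clawFree_of_notMem h.1).anti hle)

/-- The union bound `n ^ (k + 1) * (T / (n.choose 2)) ^ k`, with `4 * T / n` in place of
`n * T / (n.choose 2)`. -/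
lemma card_hit_real {n T k : ℕ} (hn : 3 ≤ n) {ι : Type*} [Fintype ι]
    (S : ι → Finset (Pot n)) (hι : Fintype.card ι = n ^ (k + 1)) {y : ℝ} (hy : 4 * T ≤ y * n) :
    ((hit T k S).card : ℝ) ≤ n * y ^ k * Fintype.card (Fin (n.choose 2) ≃ Pot n) := by
  have hn' : (3 : ℝ) ≤ n := by exact_mod_cast hn
  have h := card_hit_le T k S
  rw [hι] at h
  have h' : ((n.choose 2 : ℕ) : ℝ) ^ k * (hit T k S).card ≤
      (n : ℝ) ^ (k + 1) * ((T : ℝ) ^ k * Fintype.card (Fin (n.choose 2) ≃ Pot n)) := by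
    exact_mod_cast h
  have hN : (n : ℝ) ^ 2 / 4 ≤ (n.choose 2 : ℕ) := by
    rw [Nat.cast_choose_two]
    nlinarith
  have hNpos : (0 : ℝ) < (n.choose 2 : ℕ) := by
    refine lt_of_lt_of_le ?_ hN
    positivity
  have hx : (n : ℝ) * T ≤ y * (n.choose 2 : ℕ) := by
    have hy0 : 0 ≤ y := by
      by_contra! hneg
      have : y * n < 0 := by nlinarith
      have : (0 : ℝ) ≤ T := T.cast_nonneg
      linarith
    calc (n : ℝ) * T ≤ y * ((n : ℝ) ^ 2 / 4) := by nlinarith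
      _ ≤ _ := by gcongr
  refine le_of_mul_le_mul_left (h'.trans ?_) (pow_pos hNpos k)
  calc (n : ℝ) ^ (k + 1) * ((T : ℝ) ^ k * Fintype.card (Fin (n.choose 2) ≃ Pot n))
      = n * (n * T) ^ k * Fintype.card (Fin (n.choose 2) ≃ Pot n) := by ring
    _ ≤ n * (y * (n.choose 2 : ℕ)) ^ k * Fintype.card (Fin (n.choose 2) ≃ Pot n) := by gcongr
    _ = _ := by ring

/-- Claws contribute `n * y ^ 3`; cycles contribute the geometric series
`∑ k ≥ 3, n * y ^ k ≤ 2 * n * y ^ 3`. -/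
lemma card_bad_le {n T : ℕ} (hn : 3 ≤ n) {y : ℝ} (hy : 4 * T ≤ y * n) (hy0 : 0 ≤ y)
    (hy2 : y ≤ 1 / 2) :
    ((bad n T).card : ℝ) ≤ 3 * (n * y ^ 3) * Fintype.card (Fin (n.choose 2) ≃ Pot n) := by
  set M : ℝ := ((Fintype.card (Fin (n.choose 2) ≃ Pot n) : ℕ) : ℝ) with hM
  have hgeom : ∑ k ∈ Finset.Icc 3 n, y ^ k ≤ 2 * y ^ 3 := by
    have h1 : ∑ k ∈ Finset.Icc 3 n, y ^ k = y ^ 3 * ∑ j ∈ Finset.range (n - 2), y ^ j := by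
      rw [show Finset.Icc 3 n = Finset.Ico 3 (n + 1) from rfl, Finset.sum_Ico_eq_sum_range,
        Finset.mul_sum, show n + 1 - 3 = n - 2 by omega]
      exact Finset.sum_congr rfl fun j _ => by ring
    have h2 : ∑ j ∈ Finset.range (n - 2), y ^ j ≤ 2 := by
      have hs := (summable_geometric_of_lt_one hy0 (by linarith)).sum_le_tsum
        (Finset.range (n - 2)) (fun i _ => pow_nonneg hy0 i)
      rw [tsum_geometric_of_lt_one hy0 (by linarith)] at hs
      refine hs.trans ?_
      rw [inv_le_comm₀ (by linarith) (by norm_num)]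
      linarith
    rw [h1]
    nlinarith [pow_nonneg hy0 3]
  calc ((bad n T).card : ℝ)
      ≤ (clawBad n T).card + ∑ k ∈ Finset.Icc 3 n, ((cycBad n T k).card : ℝ) := by
        have := (Finset.card_union_le (clawBad n T) ((Finset.Icc 3 n).biUnion (cycBad n T))).trans
          (Nat.add_le_add_left Finset.card_biUnion_le _)
        exact_mod_cast this
    _ ≤ n * y ^ 3 * M + ∑ k ∈ Finset.Icc 3 n, n * y ^ k * M := by
        gcongr with k
        · exact card_hit_real hn _ (by simp) hy
        · exact card_hit_real hn _ (by simp) hy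
    _ = n * y ^ 3 * M + n * (∑ k ∈ Finset.Icc 3 n, y ^ k) * M := by
        rw [Finset.mul_sum, Finset.sum_mul]
    _ ≤ n * y ^ 3 * M + n * (2 * y ^ 3) * M := by gcongr
    _ = _ := by ring

/-! ### The limit -/

lemma processProb_le_one (n : ℕ) (P : (ℕ → SimpleGraph (Fin n)) → Prop) :
    processProb n P ≤ 1 := by
  unfold processProb
  refine div_le_one_of_le₀ ?_ (Nat.cast_nonneg _)
  refine (Finset.sum_le_sum (g := fun _ => (1 : ℝ)) fun σ _ => ?_).trans (by simp)
  split_ifs <;> norm_num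

lemma le_processProb {n : ℕ} {P : (ℕ → SimpleGraph (Fin n)) → Prop}
    (B : Finset (Fin (n.choose 2) ≃ Pot n)) (h : ∀ σ, σ ∉ B → P (processGraph n σ)) {δ : ℝ}
    (hB : (B.card : ℝ) ≤ δ * Fintype.card (Fin (n.choose 2) ≃ Pot n)) :
    1 - δ ≤ processProb n P := by
  unfold processProb
  have : Nonempty (Fin (n.choose 2) ≃ Pot n) :=
    ⟨(Fintype.equivFinOfCardEq (card_pot n)).symm⟩
  have hpos : (0 : ℝ) < Fintype.card (Fin (n.choose 2) ≃ Pot n) := by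
    exact_mod_cast Fintype.card_pos
  rw [le_div_iff₀ hpos]
  have hsum : ∑ σ : Fin (n.choose 2) ≃ Pot n, ((1 : ℝ) - if σ ∈ B then 1 else 0) ≤
      ∑ σ : Fin (n.choose 2) ≃ Pot n, (if P (processGraph n σ) then (1 : ℝ) else 0) := by
    refine Finset.sum_le_sum fun σ _ => ?_
    by_cases hσ : σ ∈ B
    · simp only [hσ, if_true, sub_self]
      split_ifs <;> norm_num
    · simp [hσ, h σ hσ]
  refine le_trans ?_ hsum
  simp
  linarith

/-- part (i) of Theorem 2 of the paper. -/
theorem statement_3 (g : ℕ → ℝ)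
    (hg : Filter.Tendsto g Filter.atTop Filter.atTop) :
    Filter.Tendsto (fun n : ℕ =>
      processProb n (fun Gs =>
        ∀ t : ℕ, (t : ℝ) ≤ (g n)⁻¹ * (n : ℝ) ^ ((2 : ℝ) / 3) →
          mu (Gs t) = degCount (Gs t) 0 + (degCount (Gs t) 1 + 1) / 2))
      Filter.atTop (nhds 1) := by
  -- with `y = 4 n ^ (2/3) / (g n * n)`, the failure probability is at most
  -- `3 n y ^ 3 = 192 / (g n) ^ 3`
  have hlim : Tendsto (fun n => 1 - 192 * ((g n)⁻¹) ^ 3) atTop (nhds 1) := by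
    have h0 : Tendsto (fun n => (g n)⁻¹) atTop (nhds 0) := tendsto_inv_atTop_zero.comp hg
    simpa using (h0.pow 3).const_mul 192 |>.const_sub 1
  refine tendsto_of_tendsto_of_tendsto_of_le_of_le' hlim tendsto_const_nhds ?_
    (Eventually.of_forall fun n => processProb_le_one n _)
  filter_upwards [hg.eventually_ge_atTop 8, eventually_ge_atTop 3] with n hgn hn
  have hg0 : 0 < g n := by linarith
  have hnpos : (0 : ℝ) < n := by exact_mod_cast (by omega : 0 < n)
  have hn1 : (1 : ℝ) ≤ n := by exact_mod_cast (by omega : 1 ≤ n)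
  set x : ℝ := (n : ℝ) ^ ((2 : ℝ) / 3) with hx
  have hx0 : 0 ≤ x := by positivity
  have hx3 : x ^ 3 = (n : ℝ) ^ 2 := by
    rw [hx, ← Real.rpow_natCast, ← Real.rpow_mul hnpos.le]
    norm_num
  have hxn : x ≤ n := by
    calc x ≤ (n : ℝ) ^ (1 : ℝ) := Real.rpow_le_rpow_of_exponent_le hn1 (by norm_num)
      _ = n := Real.rpow_one _
  -- the last admissible time; the graphs before it are subgraphs of the one at time `T`
  set T := ⌊(g n)⁻¹ * x⌋₊ with hT
  have hTle : (T : ℝ) ≤ (g n)⁻¹ * x := Nat.floor_le (by positivity)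
  set y : ℝ := 4 * ((g n)⁻¹ * x) / n with hy
  have hyn : y * n = 4 * ((g n)⁻¹ * x) := by rw [hy]; field_simp
  have hbad := card_bad_le (T := T) hn (y := y) (by rw [hyn]; linarith) (by positivity) (by
    have : (g n)⁻¹ ≤ 1 / 8 := by
      rw [inv_le_comm₀ hg0 (by norm_num)]; linarith
    rw [hy, div_le_iff₀ hnpos]
    nlinarith)
  have hval : 3 * (n * y ^ 3) = 192 * ((g n)⁻¹) ^ 3 := by
    have : (n : ℝ) * y ^ 3 = 64 * ((g n)⁻¹) ^ 3 * x ^ 3 / n ^ 2 := by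
      rw [hy]; field_simp; ring
    rw [this, hx3]
    field_simp
    norm_num
  rw [hval] at hbad
  exact le_processProb (bad n T)
    (fun σ hσ t ht => mu_processGraph hn hσ (Nat.le_floor ht)) hbad

end PaperMu
end
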